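/- Perturbation criterion for a degenerately positive functional: Suppose Q_V(u) ≥ 0 for every u ∈ C_c^∞(Ω) and Q_V admits a ground state v in Ω. Let V₀ : Ω → ℝ be a bounded measurable function whose support has compact closure contained in Ω. Then there exists t > 0 such that Q_{V + t V₀} is strictly positive in Ω (i.e., there is a continuous function W : Ω → ℝ with W > 0 everywhere such that Q_{V + t V₀}(u) ≥ ∫_Ω W|u|^p dx for all u ∈ C_c^∞(Ω)) if and only if ∫_Ω V₀ v^p dx > 0. -/

import Mathlib

open MeasureTheory Filter
open scoped RealInnerProductSpace Topology

noncomputable section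

/-- Euclidean space `ℝ^d`. -/
abbrev Euc (d : ℕ) := EuclideanSpace ℝ (Fin d)

/-- A test function on `Ω`: smooth with compact support contained in `Ω`. -/
def IsTestFun {d : ℕ} (Ω : Set (Euc d)) (u : Euc d → ℝ) : Prop :=
  ContDiff ℝ (⊤ : ℕ∞) u ∧ HasCompactSupport u ∧ tsupport u ⊆ Ω

/-- The energy functional `Q(u) = ∫_Ω (|∇u|^p + V |u|^p) dx`. -/
def energyQ {d : ℕ} (Ω : Set (Euc d)) (V : Euc d → ℝ) (p : ℝ) (u : Euc d → ℝ) : ℝ :=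
  ∫ x in Ω, (‖gradient u x‖ ^ p + V x * |u x| ^ p)

/-- `V` is measurable and bounded on every compact subset of `Ω`. -/
def LocBddPotential {d : ℕ} (Ω : Set (Euc d)) (V : Euc d → ℝ) : Prop :=
  Measurable V ∧ ∀ K : Set (Euc d), K ⊆ Ω → IsCompact K → ∃ C : ℝ, ∀ x ∈ K, |V x| ≤ C

/-- A positive supersolution of `Q'(u) = 0` in `Ω`. -/
def IsPositiveSupersolution {d : ℕ} (Ω : Set (Euc d)) (V : Euc d → ℝ) (p : ℝ)
    (v : Euc d → ℝ) : Prop :=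
  ContDiffOn ℝ 1 v Ω ∧ (∀ x ∈ Ω, 0 < v x) ∧
    ∀ φ : Euc d → ℝ, IsTestFun Ω φ → (∀ x, 0 ≤ φ x) →
      0 ≤ ∫ x in Ω, (‖gradient v x‖ ^ (p - 2) * ⟪gradient v x, gradient φ x⟫
            + V x * v x ^ (p - 1) * φ x)

/-- A positive (weak) solution of `Q'(u) = 0` in `Ω`. -/
def IsPositiveSolution {d : ℕ} (Ω : Set (Euc d)) (V : Euc d → ℝ) (p : ℝ)
    (v : Euc d → ℝ) : Prop :=
  ContDiffOn ℝ 1 v Ω ∧ (∀ x ∈ Ω, 0 < v x) ∧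
    ∀ φ : Euc d → ℝ, IsTestFun Ω φ →
      (∫ x in Ω, (‖gradient v x‖ ^ (p - 2) * ⟪gradient v x, gradient φ x⟫
            + V x * v x ^ (p - 1) * φ x)) = 0

/-- A null sequence for the functional `Q`. -/
def IsNullSequence {d : ℕ} (Ω : Set (Euc d)) (V : Euc d → ℝ) (p : ℝ)
    (u : ℕ → Euc d → ℝ) : Prop :=
  (∀ k, IsTestFun Ω (u k)) ∧ (∀ k x, 0 ≤ u k x) ∧
    ∃ B : Set (Euc d), IsOpen B ∧ IsCompact (closure B) ∧ closure B ⊆ Ω ∧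
      (∀ k, (∫ x in B, u k x ^ p) = 1) ∧
      Tendsto (fun k => energyQ Ω V p (u k)) atTop (𝓝 0)

/-- A ground state of `Q`: a positive `C¹` function on `Ω` which is the limit in
`L^p_loc(Ω)` of a null sequence. -/
def IsGroundState {d : ℕ} (Ω : Set (Euc d)) (V : Euc d → ℝ) (p : ℝ)
    (v : Euc d → ℝ) : Prop :=
  ContDiffOn ℝ 1 v Ω ∧ (∀ x ∈ Ω, 0 < v x) ∧
    ∃ u : ℕ → Euc d → ℝ, IsNullSequence Ω V p u ∧
      ∀ K : Set (Euc d), K ⊆ Ω → IsCompact K →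
        Tendsto (fun k => ∫ x in K, |u k x - v x| ^ p) atTop (𝓝 0)

/-- `Q` has a weighted spectral gap (is strictly positive) in `Ω`. -/
def HasSpectralGap {d : ℕ} (Ω : Set (Euc d)) (V : Euc d → ℝ) (p : ℝ) : Prop :=
  ∃ W : Euc d → ℝ, ContinuousOn W Ω ∧ (∀ x ∈ Ω, 0 < W x) ∧
    ∀ u : Euc d → ℝ, IsTestFun Ω u → (∫ x in Ω, W x * |u x| ^ p) ≤ energyQ Ω V p u

/-- `c_B`: the infimum of `Q(u)` over test functions with `∫_B |u|^p = 1`. -/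
def cB {d : ℕ} (Ω B : Set (Euc d)) (V : Euc d → ℝ) (p : ℝ) : ℝ :=
  sInf { q : ℝ | ∃ u : Euc d → ℝ, IsTestFun Ω u ∧ (∫ x in B, |u x| ^ p) = 1 ∧
    q = energyQ Ω V p u }

/-- The Picone Lagrangian `L(u,v)`. -/
def piconeL {d : ℕ} (p : ℝ) (u v : Euc d → ℝ) (x : Euc d) : ℝ :=
  ‖gradient u x‖ ^ p + (p - 1) * (u x / v x) ^ p * ‖gradient v x‖ ^ p
    - p * (u x / v x) ^ (p - 1) *
        (‖gradient v x‖ ^ (p - 2) * ⟪gradient u x, gradient v x⟫)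

section S1

section pointwise
variable {H : Type*} [NormedAddCommGroup H] [InnerProductSpace ℝ H]

/-- the nonlinear flux `p |b|^{p-2} ⟨b, y⟩` -/
def flux (p : ℝ) (b y : H) : ℝ := p * ‖b‖ ^ (p - 2) * ⟪b, y⟫

lemma flux_continuous {p : ℝ} (hp : 1 < p) :
    Continuous (fun z : H × H => flux p z.1 z.2) := by
  have h := (contDiff_norm_rpow (E := H) hp).continuous_fderiv one_ne_zero
  have h2 : Continuous (fun z : H × H => (fderiv ℝ (fun x : H => ‖x‖ ^ p) z.1) z.2) :=
    (h.comp continuous_fst).clm_apply continuous_snd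
  convert h2 using 2 with z
  rw [fderiv_norm_rpow _ hp]
  simp [flux, mul_assoc]

lemma flux_add (p : ℝ) (b y z : H) : flux p b (y + z) = flux p b y + flux p b z := by
  simp [flux, inner_add_right]; ring

lemma flux_sub (p : ℝ) (b y z : H) : flux p b (y - z) = flux p b y - flux p b z := by
  simp [flux, inner_sub_right]; ring

lemma flux_smul (p : ℝ) (b y : H) (c : ℝ) : flux p b (c • y) = c * flux p b y := by
  simp [flux, inner_smul_right]; ring

lemma norm_pow_mul_sq {p : ℝ} (hp : 1 < p) (b : H) : ‖b‖ ^ (p - 2) * (‖b‖ * ‖b‖) = ‖b‖ ^ p := by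
  rcases eq_or_ne b 0 with rfl | hb
  · simp [Real.zero_rpow (by linarith : p ≠ 0)]
  · have : 0 < ‖b‖ := norm_pos_iff.2 hb
    rw [← pow_two, ← Real.rpow_natCast, ← Real.rpow_add this]; norm_num

lemma flux_self {p : ℝ} (hp : 1 < p) (b : H) : flux p b b = p * ‖b‖ ^ p := by
  rw [flux, real_inner_self_eq_norm_mul_norm, mul_assoc, norm_pow_mul_sq hp]

lemma flux_le {p : ℝ} (hp : 1 < p) (b y : H) : flux p b y ≤ p * (‖b‖ ^ (p - 1) * ‖y‖) := by
  rcases eq_or_ne b 0 with rfl | hb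
  · simp [flux]; positivity
  have h0 : 0 < ‖b‖ := norm_pos_iff.2 hb
  have h1 : ‖b‖ ^ (p - 1) = ‖b‖ ^ (p - 2) * ‖b‖ := by
    rw [← Real.rpow_add_one h0.ne']; ring_nf
  rw [flux, h1, mul_assoc, mul_assoc]
  gcongr
  exact real_inner_le_norm b y

lemma flux_smul_left {p : ℝ} (hp : 1 < p) (b y : H) {c : ℝ} (hc : 0 ≤ c) :
    flux p (c • b) y = c ^ (p - 1) * flux p b y := by
  rcases hc.eq_or_lt with rfl | hc
  · simp [flux, Real.zero_rpow (by linarith : p - 1 ≠ 0)]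
  · have : c ^ (p - 1) = c ^ (p - 2) * c := by
      rw [← Real.rpow_add_one hc.ne']; ring_nf
    rw [this, flux, flux, norm_smul, Real.mul_rpow (norm_nonneg _) (norm_nonneg _), inner_smul_left,
      Real.norm_of_nonneg hc.le]
    simp; ring

/-- scalar Young with strictness -/
lemma young_strict {p : ℝ} (hp : 1 < p) {x y : ℝ} (hx : 0 ≤ x) (hy : 0 ≤ y) (hxy : x ≠ y) :
    p * (y ^ (p - 1) * x) < x ^ p + (p - 1) * y ^ p := by
  rcases hy.eq_or_lt with rfl | hy
  · rw [Real.zero_rpow (by linarith), Real.zero_rpow (by linarith)]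
    have : 0 < x := lt_of_le_of_ne hx (Ne.symm hxy)
    have := Real.rpow_pos_of_pos this p
    simpa using this
  · have hs : -1 ≤ x / y - 1 := by have := div_nonneg hx hy.le; linarith
    have hs' : x / y - 1 ≠ 0 := by
      intro h; apply hxy; field_simp at h; linarith
    have h := one_add_mul_self_lt_rpow_one_add hs hs' hp
    rw [show 1 + (x / y - 1) = x / y by ring, Real.div_rpow hx hy.le] at h
    have hyp := Real.rpow_pos_of_pos hy p
    have h3 : y ^ (p - 1) * y = y ^ p := by rw [← Real.rpow_add_one hy.ne']; ring_nf
    have h4 := mul_lt_mul_of_pos_right h hyp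
    rw [div_mul_cancel₀ _ hyp.ne', ← h3] at h4
    rw [← h3]
    have : (1 + p * (x / y - 1)) * (y ^ (p - 1) * y)
        = y ^ (p-1) * y + p * (y ^ (p-1) * x) - p * (y ^ (p-1) * y) := by
      field_simp; ring
    linarith

lemma young_le {p : ℝ} (hp : 1 < p) {x y : ℝ} (hx : 0 ≤ x) (hy : 0 ≤ y) :
    p * (y ^ (p - 1) * x) ≤ x ^ p + (p - 1) * y ^ p := by
  by_cases hxy : x = y
  · subst hxy
    rcases hx.eq_or_lt with rfl | hx
    · rw [Real.zero_rpow (by linarith), Real.zero_rpow (by linarith)]; simp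
    · rw [← Real.rpow_add_one hx.ne']; ring_nf; rfl
  · exact (young_strict hp hx hy hxy).le

/-- tangent inequality -/
lemma tangent_le {p : ℝ} (hp : 1 < p) (a b : H) :
    ‖b‖ ^ p + flux p b (a - b) ≤ ‖a‖ ^ p := by
  have h1 := flux_le hp b a
  have h2 := young_le hp (norm_nonneg a) (norm_nonneg b)
  rw [flux_sub, flux_self hp]; linarith

lemma tangent_lt {p : ℝ} (hp : 1 < p) (a b : H) (hab : a ≠ b) :
    ‖b‖ ^ p + flux p b (a - b) < ‖a‖ ^ p := by
  by_contra hcon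
  push Not at hcon
  rw [flux_sub, flux_self hp] at hcon
  have h1 := flux_le hp b a
  by_cases hn : ‖a‖ = ‖b‖
  · apply hab
    rcases eq_or_ne b 0 with rfl | hb
    · simpa using hn
    have h0 : 0 < ‖b‖ := norm_pos_iff.2 hb
    rw [hn, flux] at hcon
    have h5 : 0 < p * ‖b‖ ^ (p - 2) := by positivity
    have h6 : p * ‖b‖ ^ (p - 2) * (‖b‖ * ‖b‖) = p * ‖b‖ ^ p := by
      rw [mul_assoc, norm_pow_mul_sq hp]
    have h7 : ‖b‖ * ‖b‖ ≤ ⟪b, a⟫ := by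
      by_contra h; push Not at h
      have := mul_lt_mul_of_pos_left h h5
      linarith
    have h8 : ‖a - b‖ ^ 2 ≤ 0 := by
      rw [norm_sub_sq_real, hn, real_inner_comm]; nlinarith
    have : ‖a - b‖ = 0 := by nlinarith [norm_nonneg (a - b)]
    exact sub_eq_zero.1 (norm_eq_zero.1 this)
  · have h2 := young_strict hp (norm_nonneg a) (norm_nonneg b) hn
    linarith

/-- convexity of the `p`-th power of the norm for three weights -/
lemma norm_rpow_convex {p : ℝ} (hp : 1 < p) : ConvexOn ℝ Set.univ (fun x : H => ‖x‖ ^ p) := by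
  refine ⟨convex_univ, fun x _ y _ s t hs ht hst => ?_⟩
  have h1 := tangent_le hp x (s • x + t • y)
  have h2 := tangent_le hp y (s • x + t • y)
  rw [flux_sub] at h1 h2
  have h3 : flux p (s • x + t • y) (s • x + t • y) =
    s * flux p (s • x + t • y) x + t * flux p (s • x + t • y) y := by
      rw [flux_add, flux_smul, flux_smul]
  simp only [smul_eq_mul]
  generalize flux p (s • x + t • y) (s • x + t • y) = A at *
  generalize flux p (s • x + t • y) x = B at *
  generalize flux p (s • x + t • y) y = C at *
  have e1 := mul_le_mul_of_nonneg_left h1 hs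
  have e2 := mul_le_mul_of_nonneg_left h2 ht
  have ht' : t = 1 - s := by linarith
  subst ht'
  nlinarith

lemma norm_rpow_convex3 {p : ℝ} (hp : 1 < p) {x y z : H} {r s t : ℝ} (hr : 0 ≤ r) (hs : 0 ≤ s)
    (ht : 0 ≤ t) (h : r + s + t = 1) :
    ‖r • x + s • y + t • z‖ ^ p ≤ r * ‖x‖ ^ p + s * ‖y‖ ^ p + t * ‖z‖ ^ p := by
  set m := r • x + s • y + t • z with hm
  have h1 := tangent_le hp x m
  have h2 := tangent_le hp y m
  have h4 := tangent_le hp z m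
  rw [flux_sub] at h1 h2 h4
  have h3 : flux p m m = r * flux p m x + s * flux p m y + t * flux p m z := by
      conv_lhs => rw [hm]
      rw [← hm, flux_add, flux_add, flux_smul, flux_smul, flux_smul]
  generalize flux p m m = A at *
  generalize flux p m x = B at *
  generalize flux p m y = C at *
  generalize flux p m z = D at *
  have e1 := mul_le_mul_of_nonneg_left h1 hr
  have e2 := mul_le_mul_of_nonneg_left h2 hs
  have e3 := mul_le_mul_of_nonneg_left h4 ht
  have ht' : t = 1 - r - s := by linarith
  subst ht'
  nlinarith

/-- difference quotient bounds -/
lemma quot_bounds {p : ℝ} (hp : 1 < p) (a b : H) {s : ℝ} (hs : 0 < s) (hs1 : s ≤ 1) :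
    flux p a b ≤ (‖a + s • b‖ ^ p - ‖a‖ ^ p) / s ∧
    (‖a + s • b‖ ^ p - ‖a‖ ^ p) / s ≤ ‖a + b‖ ^ p - ‖a‖ ^ p := by
  constructor
  · rw [le_div_iff₀ hs]
    have := tangent_le hp (a + s • b) a
    rw [add_sub_cancel_left, flux_smul] at this
    linarith
  · rw [div_le_iff₀ hs]
    have := (norm_rpow_convex (H := H) hp).2 (Set.mem_univ a) (Set.mem_univ (a + b))
      (sub_nonneg.2 hs1) hs.le (by ring)
    simp only [smul_eq_mul] at this
    rw [show (1 - s) • a + s • (a + b) = a + s • b by module] at this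
    linarith

lemma quot_tendsto {p : ℝ} (hp : 1 < p) (a b : H) :
    Tendsto (fun n : ℕ => (‖a + (1 / ((n : ℝ) + 1)) • b‖ ^ p - ‖a‖ ^ p) / (1 / ((n : ℝ) + 1))) atTop
      (𝓝 (flux p a b)) := by
  have h := (hasFDerivAt_norm_rpow a hp).comp_hasDerivAt_of_eq (0 : ℝ)
    (((hasDerivAt_id (0:ℝ)).smul_const b).const_add a) (by simp)
  have h2 := hasDerivAt_iff_tendsto_slope_zero.1 h
  have h3 : Tendsto (fun n : ℕ => 1 / ((n : ℝ) + 1)) atTop (𝓝[≠] 0) := by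
    rw [tendsto_nhdsWithin_iff]
    refine ⟨tendsto_one_div_add_atTop_nhds_zero_nat, Eventually.of_forall fun n => ?_⟩
    have : (0:ℝ) < 1 / ((n:ℝ) + 1) := by positivity
    exact this.ne'
  convert h2.comp h3 using 2
  · simp [div_eq_inv_mul]
  · simp [flux, mul_assoc]

/-- a two-point estimate -/
lemma add_rpow_le {p : ℝ} (hp : 1 < p) (a b : H) :
    ‖a + b‖ ^ p ≤ 2 ^ p * (‖a‖ ^ p + ‖b‖ ^ p) := by
  have := (norm_rpow_convex (H := H) hp).2 (Set.mem_univ a) (Set.mem_univ b)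
      (by norm_num : (0:ℝ) ≤ 1/2) (by norm_num : (0:ℝ) ≤ 1/2) (by norm_num)
  simp only [smul_eq_mul] at this
  rw [← smul_add, norm_smul, Real.mul_rpow (norm_nonneg _) (norm_nonneg _)] at this
  rw [Real.norm_of_nonneg (by norm_num), Real.div_rpow (by norm_num) (by norm_num), Real.one_rpow] at this
  have h2 : (0:ℝ) < 2 ^ p := by positivity
  rw [one_div_mul_eq_div, div_le_iff₀ h2] at this
  have h3 := Real.rpow_nonneg (norm_nonneg a) p
  have h4 := Real.rpow_nonneg (norm_nonneg b) p
  nlinarith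

/-- difference of `p`-th powers -/
lemma rpow_sub_le {p : ℝ} (hp : 1 < p) {ε : ℝ} (hε : 0 < ε) : ∃ C : ℝ, 0 ≤ C ∧ ∀ a b : H,
    |‖a‖ ^ p - ‖b‖ ^ p| ≤ ε * ‖b‖ ^ p + C * ‖a - b‖ ^ p := by
  -- one sided
  have key : ∀ η : ℝ, 0 < η → ∃ C : ℝ, 0 ≤ C ∧ ∀ a b : H,
      ‖a‖ ^ p ≤ (1 + η) * ‖b‖ ^ p + C * ‖a - b‖ ^ p := by
    intro η hη
    have hc : Tendsto (fun l : ℝ => (1 - l) ^ (1 - p)) (𝓝[>] 0) (𝓝 1) := by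
      have : ContinuousAt (fun l : ℝ => (1 - l) ^ (1 - p)) 0 :=
        ContinuousAt.rpow_const (by fun_prop) (by simp)
      have h := this.tendsto
      simp only [sub_zero, Real.one_rpow] at h
      exact h.mono_left nhdsWithin_le_nhds
    have h1 := hc.eventually (gt_mem_nhds (show (1:ℝ) < 1 + η by linarith))
    have h2 : ∀ᶠ l : ℝ in 𝓝[>] 0, l ∈ Set.Ioo (0:ℝ) 1 := Ioo_mem_nhdsGT (by norm_num)
    obtain ⟨l, hl, hl0, hl1⟩ := (h1.and h2).exists
    refine ⟨l ^ (1 - p), by positivity, fun a b => ?_⟩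
    have hl1' : 0 < 1 - l := by linarith
    have := (norm_rpow_convex (H := H) hp).2 (Set.mem_univ ((1 - l)⁻¹ • b))
      (Set.mem_univ (l⁻¹ • (a - b))) hl1'.le hl0.le (by ring)
    simp only [smul_eq_mul] at this
    rw [smul_inv_smul₀ hl1'.ne', smul_inv_smul₀ hl0.ne', add_sub_cancel, norm_smul, norm_smul,
      Real.mul_rpow (norm_nonneg _) (norm_nonneg _), Real.mul_rpow (norm_nonneg _) (norm_nonneg _),
      Real.norm_of_nonneg (by positivity), Real.norm_of_nonneg (by positivity),
      Real.inv_rpow hl1'.le, Real.inv_rpow hl0.le, ← mul_assoc, ← mul_assoc, ← div_eq_mul_inv,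
      ← div_eq_mul_inv] at this
    have hr : ∀ x : ℝ, 0 < x → x / x ^ p = x ^ (1 - p) := fun x hx => by
      rw [Real.rpow_sub hx, Real.rpow_one]
    rw [hr _ hl1', hr _ hl0] at this
    have := Real.rpow_nonneg (norm_nonneg b) p
    nlinarith
  obtain ⟨C1, hC1, h1⟩ := key ε hε
  obtain ⟨C2, hC2, h2⟩ := key (min ε 1 / 2) (by positivity)
  have hm : min ε 1 / 2 * (1 + (min ε 1 / 2)) ≤ ε := by
    have ha : min ε 1 ≤ ε := min_le_left _ _
    have hb : min ε 1 ≤ 1 := min_le_right _ _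
    have hc : 0 < min ε 1 := by positivity
    nlinarith
  set η := min ε 1 / 2
  have hη : 0 < η := by positivity
  refine ⟨C1 + (η * C2 + C2), by positivity, fun a b => ?_⟩
  have e1 := h1 a b
  have e2 := h2 b a
  have e3 := h2 a b
  have hb := Real.rpow_nonneg (norm_nonneg b) p
  have hab := Real.rpow_nonneg (norm_nonneg (a - b)) p
  rw [norm_sub_rev b a] at e2
  have i1 : 0 ≤ C1 * ‖a - b‖ ^ p := by positivity
  have i2 : 0 ≤ C2 * ‖a - b‖ ^ p := by positivity
  have i3 : 0 ≤ η * C2 * ‖a - b‖ ^ p := by positivity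
  have i4 := mul_le_mul_of_nonneg_right hm hb
  have i5 := mul_le_mul_of_nonneg_left e3 hη.le
  rw [abs_le]
  constructor
  · nlinarith
  · nlinarith

/-- Bregman type coercivity, by compactness -/
lemma bregman_coercive [FiniteDimensional ℝ H] {p : ℝ} (hp : 1 < p) {δ : ℝ} (hδ : 0 < δ) :
    ∃ C : ℝ, 0 ≤ C ∧ ∀ a b : H,
      ‖b‖ ^ p ≤ C * (‖a + b‖ ^ p - ‖a‖ ^ p - flux p a b) + δ * ‖a‖ ^ p := by
  set D : H × H → ℝ := fun z => ‖z.1 + z.2‖ ^ p - ‖z.1‖ ^ p - flux p z.1 z.2 with hD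
  have hp0 : 0 < p := by linarith
  have hDc : Continuous D := by
    have hf := flux_continuous (H := H) hp
    have h1 : Continuous fun z : H × H => ‖z.1 + z.2‖ ^ p :=
      (by fun_prop : Continuous fun z : H × H => ‖z.1 + z.2‖).rpow_const fun _ => Or.inr hp0.le
    have h2 : Continuous fun z : H × H => ‖z.1‖ ^ p :=
      (by fun_prop : Continuous fun z : H × H => ‖z.1‖).rpow_const fun _ => Or.inr hp0.le
    exact (h1.sub h2).sub hf
  have hDn : ∀ z, 0 ≤ D z := by
    intro z
    have := tangent_le hp (z.1 + z.2) z.1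
    simp only [add_sub_cancel_left] at this
    simp only [hD]; linarith
  set S : Set (H × H) := {z | δ * ‖z.1‖ ^ p ≤ ‖z.2‖ ^ p} ∩ Metric.sphere 0 1 with hS
  have hSc : IsCompact S := by
    refine (isCompact_sphere _ _).inter_left ?_
    refine isClosed_le ?_ ?_
    · exact continuous_const.mul
        ((by fun_prop : Continuous fun z : H × H => ‖z.1‖).rpow_const fun _ => Or.inr hp0.le)
    · exact ((by fun_prop : Continuous fun z : H × H => ‖z.2‖).rpow_const fun _ => Or.inr hp0.le)
  have hSpos : ∀ z ∈ S, 0 < D z := by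
    intro z hz
    have hz2 : z.2 ≠ 0 := by
      intro h0
      have h1 := hz.1
      simp only [Set.mem_ofPred_eq, h0, norm_zero, Real.zero_rpow hp0.ne'] at h1
      have h2 : ‖z.1‖ ^ p ≤ 0 := by
        by_contra h; push Not at h; nlinarith [mul_pos hδ h]
      have h3 : z.1 = 0 := by
        by_contra h
        have : 0 < ‖z.1‖ ^ p := Real.rpow_pos_of_pos (norm_pos_iff.2 h) p
        linarith
      have h4 := hz.2
      rw [show z = 0 from Prod.ext h3 h0] at h4
      simp at h4
    have := tangent_lt hp (z.1 + z.2) z.1 (by simpa using hz2)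
    simp only [add_sub_cancel_left] at this
    simp only [hD]; linarith
  obtain ⟨m, hm, hmS⟩ : ∃ m : ℝ, 0 < m ∧ ∀ z ∈ S, m ≤ D z := by
    rcases S.eq_empty_or_nonempty with h | h
    · exact ⟨1, one_pos, by simp [h]⟩
    · obtain ⟨z, hz, hmin⟩ := hSc.exists_isMinOn h hDc.continuousOn
      exact ⟨D z, hSpos z hz, fun w hw => hmin hw⟩
  refine ⟨1 / m, by positivity, fun a b => ?_⟩
  have hDab := hDn (a, b)
  have ha := Real.rpow_nonneg (norm_nonneg a) p
  by_cases hc : ‖b‖ ^ p ≤ δ * ‖a‖ ^ p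
  · have : 0 ≤ 1 / m * D (a, b) := by positivity
    simp only [hD] at this; linarith
  push Not at hc
  have hz : (a, b) ≠ (0 : H × H) := by
    intro h
    simp only [Prod.mk_eq_zero] at h
    rw [h.1, h.2] at hc
    simp [Real.zero_rpow hp0.ne'] at hc
  set c := ‖(a, b)‖ with hcdef
  have hcpos : 0 < c := norm_pos_iff.2 hz
  have hmem : (c⁻¹ • a, c⁻¹ • b) ∈ S := by
    constructor
    · simp only [Set.mem_ofPred_eq, norm_smul]
      rw [Real.mul_rpow (norm_nonneg _) (norm_nonneg _), Real.mul_rpow (norm_nonneg _) (norm_nonneg _)]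
      have : 0 ≤ ‖c⁻¹‖ ^ p := by positivity
      nlinarith
    · have : (c⁻¹ • a, c⁻¹ • b) = c⁻¹ • (a, b) := rfl
      rw [mem_sphere_zero_iff_norm, this, norm_smul, Real.norm_of_nonneg (by positivity), ← hcdef,
        inv_mul_cancel₀ hcpos.ne']
  have h1 := hmS _ hmem
  have hscale : D (c⁻¹ • a, c⁻¹ • b) = (c⁻¹) ^ p * D (a, b) := by
    have hci : 0 ≤ c⁻¹ := by positivity
    have hciP : 0 < c⁻¹ := by positivity
    simp only [hD]
    rw [← smul_add, norm_smul, norm_smul, flux_smul_left hp _ _ hci, flux_smul,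
      Real.mul_rpow (norm_nonneg _) (norm_nonneg _), Real.mul_rpow (norm_nonneg _) (norm_nonneg _),
      Real.norm_of_nonneg hci]
    have : (c⁻¹) ^ p = (c⁻¹) ^ (p - 1) * c⁻¹ := by
      rw [← Real.rpow_add_one hciP.ne']; ring_nf
    rw [this]; ring
  rw [hscale, Real.inv_rpow hcpos.le, inv_mul_eq_div, le_div_iff₀ (by positivity)] at h1
  have hb : ‖b‖ ^ p ≤ c ^ p :=
    Real.rpow_le_rpow (norm_nonneg _) (norm_snd_le (a, b)) hp0.le
  have h2 : ‖b‖ ^ p ≤ 1 / m * D (a, b) := by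
    rw [one_div_mul_eq_div, le_div_iff₀ hm]
    nlinarith
  simp only [hD] at h2
  nlinarith [mul_nonneg hδ.le ha]

end pointwise

end S1

section S2

/-- compactly supported `C¹` functions -/
def C1c {d : ℕ} (Ω : Set (Euc d)) (f : Euc d → ℝ) : Prop :=
  ContDiff ℝ 1 f ∧ HasCompactSupport f ∧ tsupport f ⊆ Ω

lemma IsTestFun.c1c {d : ℕ} {Ω : Set (Euc d)} {f : Euc d → ℝ} (h : IsTestFun Ω f) : C1c Ω f :=
  ⟨h.1.of_le (by exact_mod_cast le_top), h.2.1, h.2.2⟩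

section grad
variable {d : ℕ} {f g : Euc d → ℝ} {x : Euc d}

lemma grad_add (hf : DifferentiableAt ℝ f x) (hg : DifferentiableAt ℝ g x) :
    gradient (fun y => f y + g y) x = gradient f x + gradient g x := by
  simp only [gradient]; rw [fderiv_fun_add hf hg, map_add]

lemma grad_sub (hf : DifferentiableAt ℝ f x) (hg : DifferentiableAt ℝ g x) :
    gradient (fun y => f y - g y) x = gradient f x - gradient g x := by
  simp only [gradient]; rw [fderiv_fun_sub hf hg, map_sub]

lemma grad_mul (hf : DifferentiableAt ℝ f x) (hg : DifferentiableAt ℝ g x) :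
    gradient (fun y => f y * g y) x = f x • gradient g x + g x • gradient f x := by
  simp only [gradient]; rw [fderiv_fun_mul hf hg, map_add]; simp

lemma grad_const_mul (c : ℝ) (hf : DifferentiableAt ℝ f x) :
    gradient (fun y => c * f y) x = c • gradient f x := by
  simp only [gradient]; rw [fderiv_const_mul hf c]; simp

lemma grad_comp {φ : ℝ → ℝ} {φ' : ℝ} (hφ : HasDerivAt φ φ' (f x)) (hf : DifferentiableAt ℝ f x) :
    gradient (fun y => φ (f y)) x = φ' • gradient f x := by
  simp only [gradient]
  have := (hφ.comp_hasFDerivAt x hf.hasFDerivAt).fderiv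
  simp only [Function.comp_def] at this
  rw [this]; simp

lemma norm_grad (f : Euc d → ℝ) (x : Euc d) : ‖gradient f x‖ = ‖fderiv ℝ f x‖ := by
  simp [gradient]

lemma grad_continuous (hf : ContDiff ℝ 1 f) : Continuous (gradient f) := by
  have := hf.continuous_fderiv one_ne_zero
  exact (InnerProductSpace.toDual ℝ (Euc d)).symm.continuous.comp this

lemma grad_continuousOn {Ω : Set (Euc d)} (hΩ : IsOpen Ω) (hf : ContDiffOn ℝ 1 f Ω) :
    ContinuousOn (gradient f) Ω := by
  have := hf.continuousOn_fderiv_of_isOpen hΩ le_rfl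
  exact (InnerProductSpace.toDual ℝ (Euc d)).symm.continuous.comp_continuousOn this

lemma grad_eq_zero (hx : x ∉ tsupport f) : gradient f x = 0 := by
  have : f =ᶠ[𝓝 x] fun _ => 0 := notMem_tsupport_iff_eventuallyEq.1 hx
  rw [this.gradient_eq]; simp

end grad

section lp
variable {α : Type*} [MeasurableSpace α] {μ : Measure α}

lemma lp_tendsto {p : ℝ} (hp : 1 < p) {f : ℕ → α → ℝ} {g m : α → ℝ} {C : ℝ}
    (hf : ∀ k, Integrable (fun x => |f k x| ^ p) μ) (hg : Integrable (fun x => |g x| ^ p) μ)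
    (hfg : ∀ k, Integrable (fun x => |f k x - g x| ^ p) μ)
    (h : Tendsto (fun k => ∫ x, |f k x - g x| ^ p ∂μ) atTop (𝓝 0))
    (hm : AEStronglyMeasurable m μ) (hmC : ∀ᵐ x ∂μ, |m x| ≤ C) :
    Tendsto (fun k => ∫ x, m x * |f k x| ^ p ∂μ) atTop (𝓝 (∫ x, m x * |g x| ^ p ∂μ)) := by
  have hI : ∀ w : α → ℝ, Integrable w μ → Integrable (fun x => m x * w x) μ := fun w hw =>
    hw.bdd_mul (c := C) hm (by simpa using hmC)
  set G := ∫ x, |g x| ^ p ∂μ with hG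
  have hG0 : 0 ≤ G := integral_nonneg fun x => by positivity
  rw [Metric.tendsto_atTop]
  intro ε hε
  set C' := |C| + 1
  have hC' : 0 < C' := by positivity
  obtain ⟨D, hD, hDle⟩ := rpow_sub_le (H := ℝ) hp (show 0 < ε / (2 * C' * (G + 1)) by positivity)
  have h1 := (Metric.tendsto_atTop.1 h) (ε / (2 * C' * (D + 1))) (by positivity)
  obtain ⟨N, hN⟩ := h1
  refine ⟨N, fun k hk => ?_⟩
  have h2 := hN k hk
  rw [Real.dist_eq, sub_zero, abs_of_nonneg (integral_nonneg fun x => by positivity)] at h2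
  rw [Real.dist_eq, ← integral_sub (hI _ (hf k)) (hI _ hg)]
  calc |∫ x, m x * |f k x| ^ p - m x * |g x| ^ p ∂μ|
      ≤ ∫ x, C' * (ε / (2 * C' * (G + 1)) * |g x| ^ p + D * |f k x - g x| ^ p) ∂μ := by
        rw [← Real.norm_eq_abs]
        refine norm_integral_le_of_norm_le ?_ ?_
        · exact ((hg.const_mul _).add ((hfg k).const_mul _)).const_mul _
        · filter_upwards [hmC] with x hx
          rw [← mul_sub, norm_mul, Real.norm_eq_abs, Real.norm_eq_abs]
          refine mul_le_mul (hx.trans ?_) (by simpa using hDle (f k x) (g x)) (abs_nonneg _) hC'.le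
          have := le_abs_self C
          simp only [C']; linarith
    _ = C' * (ε / (2 * C' * (G + 1)) * G + D * ∫ x, |f k x - g x| ^ p ∂μ) := by
        rw [integral_const_mul, integral_add (hg.const_mul _) ((hfg k).const_mul _),
          integral_const_mul, integral_const_mul]
    _ < ε := by
        have e1 : C' * (ε / (2 * C' * (G + 1)) * G) ≤ ε / 2 := by
          have : C' * (ε / (2 * C' * (G + 1)) * G) = ε / 2 * (G / (G + 1)) := by field_simp
          rw [this]
          have : G / (G + 1) ≤ 1 := by rw [div_le_one (by positivity)]; linarith
          nlinarith
        have e2 : C' * (D * ∫ x, |f k x - g x| ^ p ∂μ) < ε / 2 := by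
          have e3 : D * ∫ x, |f k x - g x| ^ p ∂μ ≤ (D + 1) * ∫ x, |f k x - g x| ^ p ∂μ := by
            have : 0 ≤ ∫ x, |f k x - g x| ^ p ∂μ := integral_nonneg fun x => by positivity
            nlinarith
          have e4 : (D + 1) * ∫ x, |f k x - g x| ^ p ∂μ < (D + 1) * (ε / (2 * C' * (D + 1))) := by
            gcongr
          calc _ < C' * ((D + 1) * (ε / (2 * C' * (D + 1)))) := by gcongr; linarith
            _ = ε / 2 := by field_simp
        linarith
end lp

section energy
variable {d : ℕ} {Ω : Set (Euc d)}

lemma int_of_cont {K : Set (Euc d)} {g : Euc d → ℝ} (hK : IsCompact K)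
    (hg : ContinuousOn g K) (h0 : ∀ x ∉ K, g x = 0) : Integrable g := by
  rw [← integrableOn_iff_integrable_of_support_subset (s := K)]
  · exact hg.integrableOn_compact hK
  · intro x hx; by_contra h; exact hx (h0 x h)

lemma locbdd_intOn {V : Euc d → ℝ} (hV : LocBddPotential Ω V) {K : Set (Euc d)} {g : Euc d → ℝ}
    (hK : IsCompact K) (hKΩ : K ⊆ Ω) (hg : IntegrableOn g K) :
    IntegrableOn (fun x => V x * g x) K := by
  obtain ⟨C, hC⟩ := hV.2 K hKΩ hK
  refine hg.bdd_mul (c := C) hV.1.aestronglyMeasurable ?_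
  filter_upwards [ae_restrict_mem hK.measurableSet] with x hx
  exact hC x hx

lemma locbdd_int {V : Euc d → ℝ} (hV : LocBddPotential Ω V) {K : Set (Euc d)} {g : Euc d → ℝ}
    (hK : IsCompact K) (hKΩ : K ⊆ Ω) (hg : Integrable g) (h0 : ∀ x ∉ K, g x = 0) :
    Integrable (fun x => V x * g x) := by
  rw [← integrableOn_iff_integrable_of_support_subset (s := K)]
  · exact locbdd_intOn hV hK hKΩ hg.integrableOn
  · intro x hx; by_contra h; exact hx (by simp [h0 x h])

lemma cont_rpow {X : Type*} [TopologicalSpace X] {p : ℝ} (hp : 1 < p) {f : X → ℝ} (hf : Continuous f) :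
    Continuous (fun x => |f x| ^ p) :=
  (continuous_abs.comp hf).rpow_const fun _ => Or.inr (by linarith)

lemma C1c.int_pow {f : Euc d → ℝ} (hf : C1c Ω f) {p : ℝ} (hp : 1 < p) :
    Integrable (fun x => |f x| ^ p) :=
  int_of_cont hf.2.1 (cont_rpow hp hf.1.continuous).continuousOn fun x hx => by
    rw [image_eq_zero_of_notMem_tsupport hx]; simp [Real.zero_rpow (by linarith : p ≠ 0)]

lemma C1c.cont_grad {f : Euc d → ℝ} (hf : C1c Ω f) {p : ℝ} (hp : 1 < p) :
    Continuous (fun x => ‖gradient f x‖ ^ p) :=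
  (grad_continuous hf.1).norm.rpow_const fun _ => Or.inr (by linarith)

lemma C1c.int_grad {f : Euc d → ℝ} (hf : C1c Ω f) {p : ℝ} (hp : 1 < p) :
    Integrable (fun x => ‖gradient f x‖ ^ p) :=
  int_of_cont hf.2.1 (hf.cont_grad hp).continuousOn fun x hx => by
    rw [grad_eq_zero hx]; simp [Real.zero_rpow (by linarith : p ≠ 0)]

lemma C1c.int_V {f : Euc d → ℝ} (hf : C1c Ω f) {p : ℝ} (hp : 1 < p) {V : Euc d → ℝ}
    (hV : LocBddPotential Ω V) : Integrable (fun x => V x * |f x| ^ p) :=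
  locbdd_int hV hf.2.1 hf.2.2 (hf.int_pow hp) fun x hx => by
    rw [image_eq_zero_of_notMem_tsupport hx]; simp [Real.zero_rpow (by linarith : p ≠ 0)]

lemma C1c.energy {f : Euc d → ℝ} (hf : C1c Ω f) {p : ℝ} (hp : 1 < p) (V : Euc d → ℝ) :
    energyQ Ω V p f = ∫ x, (‖gradient f x‖ ^ p + V x * |f x| ^ p) := by
  refine setIntegral_eq_integral_of_forall_compl_eq_zero fun x hx => ?_
  have hx : x ∉ tsupport f := fun h => hx (hf.2.2 h)
  rw [image_eq_zero_of_notMem_tsupport hx, grad_eq_zero hx]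
  simp [Real.zero_rpow (by linarith : p ≠ 0)]

lemma C1c.energy_add {f : Euc d → ℝ} (hf : C1c Ω f) {p : ℝ} (hp : 1 < p) {V : Euc d → ℝ}
    (hV : LocBddPotential Ω V) :
    energyQ Ω V p f = (∫ x, ‖gradient f x‖ ^ p) + ∫ x, V x * |f x| ^ p := by
  rw [hf.energy hp, integral_add (hf.int_grad hp) (hf.int_V hp hV)]

/-- mollification -/
lemma mollify {f : Euc d → ℝ} (hf : C1c Ω f) (hΩ : IsOpen Ω) :
    ∃ K : Set (Euc d), IsCompact K ∧ K ⊆ Ω ∧ ∀ ε > 0, ∃ g : Euc d → ℝ, IsTestFun Ω g ∧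
      tsupport g ⊆ K ∧ (∀ x, |g x - f x| ≤ ε) ∧ ∀ x, ‖gradient g x - gradient f x‖ ≤ ε := by
  obtain ⟨δ, hδ, hδΩ⟩ := hf.2.1.isCompact.exists_cthickening_subset_open hΩ hf.2.2
  have hKc : IsCompact (Metric.cthickening δ (tsupport f)) := hf.2.1.isCompact.cthickening
  refine ⟨_, hKc, hδΩ, fun ε hε => ?_⟩
  have hu1 : UniformContinuous f := hf.2.1.uniformContinuous_of_continuous hf.1.continuous
  have hfc : Continuous (fderiv ℝ f) := hf.1.continuous_fderiv one_ne_zero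
  have hu2 : UniformContinuous (fderiv ℝ f) :=
    (hf.2.1.fderiv ℝ).uniformContinuous_of_continuous hfc
  obtain ⟨r1, hr1, h1⟩ := Metric.uniformContinuous_iff.1 hu1 ε hε
  obtain ⟨r2, hr2, h2⟩ := Metric.uniformContinuous_iff.1 hu2 ε hε
  set r := min δ (min r1 r2) with hr
  have hrpos : 0 < r := by positivity
  let φ : ContDiffBump (0 : Euc d) := ⟨r / 2, r, by positivity, by linarith⟩
  let L := ContinuousLinearMap.lsmul ℝ ℝ (E := ℝ)
  let g := MeasureTheory.convolution (φ.normed volume) f L volume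
  have hder : ∀ x, HasFDerivAt g (MeasureTheory.convolution (φ.normed volume) (fderiv ℝ f)
      (L.precompR (Euc d)) volume x) x := fun x =>
    hf.2.1.hasFDerivAt_convolution_right L φ.continuous_normed.locallyIntegrable hf.1 x
  have hLeq : L.precompR (Euc d) = ContinuousLinearMap.lsmul ℝ ℝ (E := Euc d →L[ℝ] ℝ) := by
    ext a b c; simp [L]
  have hsupp : tsupport g ⊆ Metric.cthickening δ (tsupport f) := by
    apply closure_minimal _ Metric.isClosed_cthickening
    intro x hx
    have := support_convolution_subset L hx
    obtain ⟨a, ha, b, hb, rfl⟩ := this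
    rw [φ.support_normed_eq] at ha
    refine Metric.mem_cthickening_of_dist_le _ b δ _ (subset_tsupport f hb) ?_
    have : ‖a‖ < r := by simpa [φ] using ha
    simp only [dist_eq_norm, add_sub_cancel_right]
    exact this.le.trans (min_le_left _ _)
  refine ⟨g, ⟨?_, ?_, hsupp.trans hδΩ⟩, hsupp, fun x => ?_, fun x => ?_⟩
  · exact φ.hasCompactSupport_normed.contDiff_convolution_left L φ.contDiff_normed
      hf.1.continuous.locallyIntegrable
  · exact HasCompactSupport.intro' hKc hKc.isClosed fun x hx =>
      image_eq_zero_of_notMem_tsupport fun h => hx (hsupp h)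
  · have := φ.dist_normed_convolution_le (μ := volume) (g := f) (x₀ := x) (ε := ε)
      hf.1.continuous.aestronglyMeasurable (fun y hy => (h1 (lt_of_lt_of_le hy ?_)).le)
    · exact this
    · exact (min_le_right _ _).trans (min_le_left _ _)
  · have := φ.dist_normed_convolution_le (μ := volume) (g := fderiv ℝ f) (x₀ := x) (ε := ε)
      hfc.aestronglyMeasurable (fun y hy => (h2 (lt_of_lt_of_le hy ?_)).le)
    · simp only [gradient]
      rw [← map_sub, LinearIsometryEquiv.norm_map, (hder x).fderiv, hLeq]
      rw [dist_eq_norm] at this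
      exact this
    · exact (min_le_right _ _).trans (min_le_right _ _)

lemma energy_nonneg_C1c (hΩ : IsOpen Ω) {V : Euc d → ℝ} (hV : LocBddPotential Ω V) {p : ℝ}
    (hp : 1 < p) (hQ : ∀ u : Euc d → ℝ, IsTestFun Ω u → 0 ≤ energyQ Ω V p u)
    {f : Euc d → ℝ} (hf : C1c Ω f) : 0 ≤ energyQ Ω V p f := by
  obtain ⟨K, hK, hKΩ, hm⟩ := mollify hf hΩ
  have hp0 : 0 < p := by linarith
  choose g hgt hgs hg1 hg2 using fun n : ℕ => hm (1 / ((n : ℝ) + 1)) (by positivity)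
  have hlim0 : Tendsto (fun n : ℕ => 1 / ((n : ℝ) + 1)) atTop (𝓝 0) :=
    tendsto_one_div_add_atTop_nhds_zero_nat
  have hle1 : ∀ n : ℕ, 1 / ((n : ℝ) + 1) ≤ 1 := fun n => by
    rw [div_le_one (by positivity)]; linarith [(Nat.cast_nonneg n : (0:ℝ) ≤ n)]
  obtain ⟨M1, hM1⟩ := hf.1.continuous.bounded_above_of_compact_support hf.2.1
  have hgc : Continuous (gradient f) := grad_continuous hf.1
  obtain ⟨M2, hM2⟩ := hgc.bounded_above_of_compact_support (HasCompactSupport.intro' hf.2.1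
    (isClosed_tsupport f) fun x hx => grad_eq_zero hx)
  obtain ⟨C, hC⟩ := hV.2 K hKΩ hK
  have key : Tendsto (fun n => energyQ Ω V p (g n)) atTop (𝓝 (energyQ Ω V p f)) := by
    simp_rw [fun n => (hgt n).c1c.energy hp V]
    rw [hf.energy hp V]
    refine tendsto_integral_of_dominated_convergence
      (K.indicator fun _ => (M2 + 1) ^ p + |C| * (M1 + 1) ^ p) ?_ ?_ ?_ ?_
    · intro n
      exact (((hgt n).c1c.int_grad hp).add ((hgt n).c1c.int_V hp hV)).aestronglyMeasurable
    · exact (integrable_indicator_iff hK.measurableSet).2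
        (integrableOn_const hK.measure_lt_top.ne)
    · intro n
      refine Eventually.of_forall fun x => ?_
      by_cases hx : x ∈ K
      · rw [Set.indicator_of_mem hx]
        have a1 : |g n x| ≤ M1 + 1 := by
          have := hg1 n x
          have h3 := hM1 x
          rw [Real.norm_eq_abs] at h3
          have := abs_sub_abs_le_abs_sub (g n x) (f x)
          linarith [hle1 n]
        have a2 : ‖gradient (g n) x‖ ≤ M2 + 1 := by
          have := hg2 n x
          have h3 := hM2 x
          have := norm_sub_norm_le (gradient (g n) x) (gradient f x)
          linarith [hle1 n]
        refine (norm_add_le _ _).trans (add_le_add ?_ ?_)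
        · rw [Real.norm_of_nonneg (by positivity)]
          exact Real.rpow_le_rpow (norm_nonneg _) a2 hp0.le
        · rw [norm_mul, Real.norm_eq_abs, Real.norm_of_nonneg (by positivity)]
          refine mul_le_mul ((hC x hx).trans (le_abs_self C)) ?_ (by positivity) (abs_nonneg _)
          exact Real.rpow_le_rpow (abs_nonneg _) a1 hp0.le
      · have hx' : x ∉ tsupport (g n) := fun h => hx (hgs n h)
        rw [Set.indicator_of_notMem hx, image_eq_zero_of_notMem_tsupport hx', grad_eq_zero hx']
        simp [Real.zero_rpow hp0.ne']
    · refine Eventually.of_forall fun x => ?_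
      have t1 : Tendsto (fun n => g n x) atTop (𝓝 (f x)) := by
        rw [tendsto_iff_dist_tendsto_zero]
        exact squeeze_zero (fun _ => dist_nonneg) (fun n => hg1 n x) hlim0
      have t2 : Tendsto (fun n => gradient (g n) x) atTop (𝓝 (gradient f x)) := by
        rw [tendsto_iff_dist_tendsto_zero]
        exact squeeze_zero (fun _ => dist_nonneg)
          (fun n => by rw [dist_eq_norm]; exact hg2 n x) hlim0
      exact (t2.norm.rpow_const (Or.inr hp0.le)).add
        ((t1.abs.rpow_const (Or.inr hp0.le)).const_mul _)
  exact ge_of_tendsto' key fun n => hQ _ (hgt n)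

end energy

end S2

section S3

section tools
variable {d : ℕ} {Ω : Set (Euc d)}

lemma exists_cutoff (hΩ : IsOpen Ω) {K : Set (Euc d)} (hK : IsCompact K) (hKΩ : K ⊆ Ω) :
    ∃ χ : Euc d → ℝ, C1c Ω χ ∧ (∀ x, 0 ≤ χ x) ∧ (∀ x, χ x ≤ 1) ∧
      ∀ x ∈ K, χ =ᶠ[𝓝 x] fun _ => 1 := by
  obtain ⟨δ, hδ, hδΩ⟩ := hK.exists_cthickening_subset_open hΩ hKΩ
  obtain ⟨f, hf, hr, hs, h1⟩ := exists_contMDiff_support_eq_eq_one_iff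
    (modelWithCornersSelf ℝ (Euc d)) (n := 1)
    (s := Metric.thickening δ K) (t := Metric.cthickening (δ / 2) K) Metric.isOpen_thickening
    Metric.isClosed_cthickening (Metric.cthickening_subset_thickening' hδ (by linarith) K)
  have hts : tsupport f ⊆ Metric.cthickening δ K := by
    rw [tsupport, hs]; exact Metric.closure_thickening_subset_cthickening δ K
  refine ⟨f, ⟨?_, ?_, hts.trans hδΩ⟩, fun x => (hr ⟨x, rfl⟩).1, fun x => (hr ⟨x, rfl⟩).2, ?_⟩
  · exact hf.contDiff
  · exact hK.cthickening.of_isClosed_subset (isClosed_tsupport f) hts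
  · intro x hx
    have : Metric.thickening (δ / 2) K ∈ 𝓝 x :=
      Metric.isOpen_thickening.mem_nhds (Metric.self_subset_thickening (by positivity) K hx)
    filter_upwards [this] with y hy
    exact (h1 y).1 (Metric.thickening_subset_cthickening _ _ hy)

lemma C1c.zero_off {f : Euc d → ℝ} {x : Euc d} (hx : x ∉ tsupport f) : f x = 0 :=
  image_eq_zero_of_notMem_tsupport hx

lemma C1c.mul_on (hΩ : IsOpen Ω) {χ w : Euc d → ℝ} (hχ : C1c Ω χ) (hw : ContDiffOn ℝ 1 w Ω) :
    C1c Ω (fun x => χ x * w x) := by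
  have hsub : tsupport (fun x => χ x * w x) ⊆ tsupport χ := tsupport_mul_subset_left
  refine ⟨?_, hχ.2.1.mul_right, hsub.trans hχ.2.2⟩
  rw [contDiff_iff_contDiffAt]
  intro x
  by_cases hx : x ∈ tsupport χ
  · exact hχ.1.contDiffAt.mul (hw.contDiffAt (hΩ.mem_nhds (hχ.2.2 hx)))
  · have : (fun x => χ x * w x) =ᶠ[𝓝 x] fun _ => 0 := by
      filter_upwards [notMem_tsupport_iff_eventuallyEq.1 hx] with y hy
      simp [hy]
    exact contDiffAt_const.congr_of_eventuallyEq this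

lemma C1c.mul {χ w : Euc d → ℝ} (hχ : C1c Ω χ) (hw : ContDiff ℝ 1 w) :
    C1c Ω (fun x => χ x * w x) :=
  ⟨hχ.1.mul hw, hχ.2.1.mul_right, (tsupport_mul_subset_left).trans hχ.2.2⟩

lemma C1c.add {f g : Euc d → ℝ} (hf : C1c Ω f) (hg : C1c Ω g) : C1c Ω (fun x => f x + g x) :=
  ⟨hf.1.add hg.1, hf.2.1.add hg.2.1, (tsupport_add f g).trans (Set.union_subset hf.2.2 hg.2.2)⟩

lemma C1c.sub {f g : Euc d → ℝ} (hf : C1c Ω f) (hg : C1c Ω g) : C1c Ω (fun x => f x - g x) :=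
  ⟨hf.1.sub hg.1, hf.2.1.sub hg.2.1, (tsupport_sub f g).trans (Set.union_subset hf.2.2 hg.2.2)⟩

lemma C1c.int {f : Euc d → ℝ} (hf : C1c Ω f) : Integrable f :=
  hf.1.continuous.integrable_of_hasCompactSupport hf.2.1

/-- a continuous function times a `C1c` function is integrable -/
lemma C1c.int_mul {f g : Euc d → ℝ} (hf : C1c Ω f) (hg : Continuous g) :
    Integrable (fun x => f x * g x) :=
  (hf.1.continuous.mul hg).integrable_of_hasCompactSupport hf.2.1.mul_right

lemma le_one_add_rpow {p : ℝ} (hp : 1 < p) {t : ℝ} (ht : 0 ≤ t) : t ≤ 1 + t ^ p := by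
  rcases le_total t 1 with h | h
  · have := Real.rpow_nonneg ht p; linarith
  · have := Real.rpow_le_rpow_of_exponent_le h hp.le
    rw [Real.rpow_one] at this; linarith

lemma le_tau_add_rpow {p : ℝ} (hp : 1 < p) {τ : ℝ} (hτ : 0 < τ) {t : ℝ} (ht : 0 ≤ t) :
    t ≤ τ + τ ^ (1 - p) * t ^ p := by
  have h := mul_le_mul_of_nonneg_left (le_one_add_rpow hp (t := t / τ) (by positivity)) hτ.le
  rw [Real.div_rpow ht hτ.le, Real.rpow_sub hτ, Real.rpow_one] at *
  have e : τ * (t / τ) = t := by field_simp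
  rw [e] at h
  calc t ≤ _ := h
    _ = _ := by ring

lemma l1_of_lp {p : ℝ} (hp : 1 < p) {S : Set (Euc d)} (hS : IsCompact S) {D : ℕ → Euc d → ℝ}
    (hD : ∀ k, Continuous (D k))
    (h : Tendsto (fun k => ∫ x in S, |D k x| ^ p) atTop (𝓝 0)) :
    Tendsto (fun k => ∫ x in S, |D k x|) atTop (𝓝 0) := by
  rw [Metric.tendsto_atTop]
  intro ε hε
  set m := volume.real S with hm
  have hm0 : 0 ≤ m := measureReal_nonneg
  set τ := ε / (2 * (m + 1))
  have hτ : 0 < τ := by positivity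
  have hτp : 0 < τ ^ (1 - p) := by positivity
  obtain ⟨N, hN⟩ := Metric.tendsto_atTop.1 h (ε / 2 / τ ^ (1 - p)) (by positivity)
  refine ⟨N, fun k hk => ?_⟩
  have h1 := hN k hk
  rw [Real.dist_eq, sub_zero, abs_of_nonneg (integral_nonneg fun x => by positivity)] at h1 ⊢
  have i1 : IntegrableOn (fun x => |D k x| ^ p) S :=
    (cont_rpow hp (hD k)).continuousOn.integrableOn_compact hS
  have i0 : IntegrableOn (fun x => |D k x|) S :=
    (hD k).abs.continuousOn.integrableOn_compact hS
  have ic : IntegrableOn (fun _ : Euc d => τ) S := integrableOn_const hS.measure_lt_top.ne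
  calc ∫ x in S, |D k x| ≤ ∫ x in S, (τ + τ ^ (1 - p) * |D k x| ^ p) :=
        integral_mono i0 (ic.add (i1.const_mul _)) fun x => le_tau_add_rpow hp hτ (abs_nonneg _)
    _ = m * τ + τ ^ (1 - p) * ∫ x in S, |D k x| ^ p := by
        rw [integral_add ic (i1.const_mul _), integral_const_mul]
        simp [hm]
    _ < ε / 2 + ε / 2 := by
        apply add_lt_add_of_le_of_lt
        · simp only [τ]
          have : m * (ε / (2 * (m + 1))) = ε / 2 * (m / (m + 1)) := by field_simp
          rw [this]
          have : m / (m + 1) ≤ 1 := by rw [div_le_one (by positivity)]; linarith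
          nlinarith
        · rw [lt_div_iff₀ hτp] at h1
          linarith
    _ = ε := by ring

lemma weak_scalar {p : ℝ} (hp : 1 < p) {ψ F : Euc d → ℝ} (hψ : C1c Ω ψ) (hψ0 : ∀ x, 0 ≤ ψ x)
    (hF : Continuous F) (e : Euc d) {D : ℕ → Euc d → ℝ} (hD : ∀ k, C1c Ω (D k)) {S : Set (Euc d)}
    (hS : IsCompact S) (hψS : tsupport ψ ⊆ S)
    (h : Tendsto (fun k => ∫ x in S, |D k x| ^ p) atTop (𝓝 0)) {B : ℝ}
    (hB : ∀ k, ∫ x, ψ x * ‖gradient (D k) x‖ ^ p ≤ B) :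
    Tendsto (fun k => ∫ x, ψ x * (F x * fderiv ℝ (D k) x e)) atTop (𝓝 0) := by
  have h1 := l1_of_lp hp hS (fun k => (hD k).1.continuous) h
  rw [Metric.tendsto_atTop]
  intro ε hε
  set I0 := ∫ x, ψ x with hI0
  set c := ‖e‖ * (|I0| + |B|) with hc
  have hc0 : 0 ≤ c := by positivity
  obtain ⟨G, hG, hGF, -⟩ := hF.exists_contDiff_approx 1 (ε := fun _ => ε / (2 * (c + 1)))
    continuous_const (fun _ => by positivity)
  have hψG : C1c Ω (fun x => ψ x * G x) := hψ.mul (by exact_mod_cast hG)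
  have hdc : Continuous (fun x => fderiv ℝ (fun y => ψ y * G y) x e) :=
    (hψG.1.continuous_fderiv one_ne_zero).clm_apply continuous_const
  have hdz : ∀ x ∉ tsupport ψ, fderiv ℝ (fun y => ψ y * G y) x e = 0 := fun x hx => by
    rw [fderiv_of_notMem_tsupport ℝ (fun h => hx (tsupport_mul_subset_left h))]; simp
  have hdcs : HasCompactSupport (fun x => fderiv ℝ (fun y => ψ y * G y) x e) :=
    HasCompactSupport.intro' hψ.2.1 (isClosed_tsupport ψ) hdz
  obtain ⟨M, hM⟩ := hdc.bounded_above_of_compact_support hdcs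
  have hM0 : 0 ≤ M := (norm_nonneg _).trans (hM 0)
  obtain ⟨N, hN⟩ := Metric.tendsto_atTop.1 h1 (ε / (2 * (M + 1))) (by positivity)
  refine ⟨N, fun k hk => ?_⟩
  have h2 := hN k hk
  rw [Real.dist_eq, sub_zero, abs_of_nonneg (integral_nonneg fun x => by positivity)] at h2
  rw [Real.dist_eq, sub_zero]
  have hDc : Continuous (fun x => fderiv ℝ (D k) x e) :=
    ((hD k).1.continuous_fderiv one_ne_zero).clm_apply continuous_const
  have iA : Integrable (fun x => ψ x * ((F x - G x) * fderiv ℝ (D k) x e)) :=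
    hψ.int_mul ((hF.sub hG.continuous).mul hDc)
  have iB : Integrable (fun x => (ψ x * G x) * fderiv ℝ (D k) x e) := hψG.int_mul hDc
  have split : ∫ x, ψ x * (F x * fderiv ℝ (D k) x e) =
      (∫ x, ψ x * ((F x - G x) * fderiv ℝ (D k) x e)) + ∫ x, (ψ x * G x) * fderiv ℝ (D k) x e := by
    rw [← integral_add iA iB]; congr 1; ext x; ring
  have ibp : ∫ x, (ψ x * G x) * fderiv ℝ (D k) x e =
      - ∫ x, fderiv ℝ (fun y => ψ y * G y) x e * D k x := by
    refine integral_mul_fderiv_eq_neg_fderiv_mul_of_integrable ?_ iB ?_ ?_ ?_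
    · exact (hdc.mul (hD k).1.continuous).integrable_of_hasCompactSupport hdcs.mul_right
    · exact hψG.int_mul (hD k).1.continuous
    · exact fun x _ => (hψG.1.differentiable one_ne_zero) x
    · exact fun x _ => ((hD k).1.differentiable one_ne_zero) x
  have b1 : |∫ x, ψ x * ((F x - G x) * fderiv ℝ (D k) x e)| ≤ ε / (2 * (c + 1)) * c := by
    have ig : Integrable (fun x => ψ x * ‖gradient (D k) x‖ ^ p) := hψ.int_mul ((hD k).cont_grad hp)
    calc _ ≤ ∫ x, ε / (2 * (c + 1)) * (‖e‖ * (ψ x + ψ x * ‖gradient (D k) x‖ ^ p)) := by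
          rw [← Real.norm_eq_abs]
          refine norm_integral_le_of_norm_le
            (((hψ.int.add ig).const_mul _).const_mul _) (Eventually.of_forall fun x => ?_)
          rw [norm_mul, norm_mul, Real.norm_of_nonneg (hψ0 x)]
          have a1 : ‖F x - G x‖ ≤ ε / (2 * (c + 1)) := by
            rw [← dist_eq_norm, dist_comm]; exact (hGF x).le
          have a2 : ‖fderiv ℝ (D k) x e‖ ≤ (1 + ‖gradient (D k) x‖ ^ p) * ‖e‖ := by
            refine ((fderiv ℝ (D k) x).le_opNorm e).trans ?_
            rw [← norm_grad]
            gcongr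
            exact le_one_add_rpow hp (norm_nonneg _)
          calc _ ≤ ψ x * (ε / (2 * (c + 1)) * ((1 + ‖gradient (D k) x‖ ^ p) * ‖e‖)) := by
                gcongr
                exact hψ0 x
            _ = _ := by ring
      _ = ε / (2 * (c + 1)) * (‖e‖ * (I0 + ∫ x, ψ x * ‖gradient (D k) x‖ ^ p)) := by
          rw [integral_const_mul, integral_const_mul, integral_add hψ.int ig]
      _ ≤ _ := by
          rw [hc]
          gcongr
          · exact le_abs_self _
          · exact (hB k).trans (le_abs_self _)
  have b2 : |∫ x, fderiv ℝ (fun y => ψ y * G y) x e * D k x| ≤ M * ∫ x in S, |D k x| := by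
    rw [← setIntegral_eq_integral_of_forall_compl_eq_zero (s := S), ← integral_const_mul]
    · rw [← Real.norm_eq_abs]
      refine norm_integral_le_of_norm_le ?_ (Eventually.of_forall fun x => ?_)
      · exact ((hD k).1.continuous.abs.continuousOn.integrableOn_compact hS).const_mul _
      · rw [norm_mul, Real.norm_eq_abs (D k x)]
        gcongr
        exact hM x
    · intro x hx
      rw [hdz x (fun h => hx (hψS h)), zero_mul]
  rw [split, ibp]
  have e1 : ε / (2 * (c + 1)) * c ≤ ε / 2 := by
    have : ε / (2 * (c + 1)) * c = ε / 2 * (c / (c + 1)) := by field_simp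
    rw [this]
    have : c / (c + 1) ≤ 1 := by rw [div_le_one (by positivity)]; linarith
    nlinarith
  have e2 : M * ∫ x in S, |D k x| < ε / 2 := by
    have : 0 ≤ ∫ x in S, |D k x| := integral_nonneg fun x => abs_nonneg _
    calc _ ≤ (M + 1) * ∫ x in S, |D k x| := by nlinarith
      _ < (M + 1) * (ε / (2 * (M + 1))) := by gcongr
      _ = ε / 2 := by field_simp
  have := abs_add_le (∫ x, ψ x * ((F x - G x) * fderiv ℝ (D k) x e))
    (- ∫ x, fderiv ℝ (fun y => ψ y * G y) x e * D k x)
  rw [abs_neg] at this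
  linarith

lemma flux_expand {p : ℝ} (b : Euc d) (f : Euc d → ℝ) (x : Euc d) :
    flux p b (gradient f x) =
      ∑ i, flux p b (EuclideanSpace.single i 1) * fderiv ℝ f x (EuclideanSpace.single i 1) := by
  have h2 : ∀ (y : Euc d) i, inner ℝ y (EuclideanSpace.single i (1:ℝ)) = y i := by
    intro y i
    rw [EuclideanSpace.inner_single_right]; simp
  have h1 : ∀ i, fderiv ℝ f x (EuclideanSpace.single i 1) = (gradient f x) i := by
    intro i
    rw [← inner_gradient_left, h2]
  simp only [h1, flux, h2]
  rw [PiLp.inner_apply, Finset.mul_sum]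
  refine Finset.sum_congr rfl fun i _ => ?_
  simp; ring

lemma weak_flux {p : ℝ} (hp : 1 < p) {ψ : Euc d → ℝ} {A : Euc d → Euc d} (hψ : C1c Ω ψ)
    (hψ0 : ∀ x, 0 ≤ ψ x)
    (hA : Continuous A) {D : ℕ → Euc d → ℝ} (hD : ∀ k, C1c Ω (D k)) {S : Set (Euc d)}
    (hS : IsCompact S) (hψS : tsupport ψ ⊆ S)
    (h : Tendsto (fun k => ∫ x in S, |D k x| ^ p) atTop (𝓝 0)) {B : ℝ}
    (hB : ∀ k, ∫ x, ψ x * ‖gradient (D k) x‖ ^ p ≤ B) :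
    Tendsto (fun k => ∫ x, ψ x * flux p (A x) (gradient (D k) x)) atTop (𝓝 0) := by
  have hF : ∀ i : Fin d, Continuous (fun x => flux p (A x) (EuclideanSpace.single i 1)) := fun i =>
    (flux_continuous hp).comp (hA.prodMk continuous_const)
  have hs : ∀ k, ∫ x, ψ x * flux p (A x) (gradient (D k) x) =
      ∑ i : Fin d, ∫ x, ψ x * (flux p (A x) (EuclideanSpace.single i 1) *
        fderiv ℝ (D k) x (EuclideanSpace.single i 1)) := by
    intro k
    rw [← integral_finsetSum]
    · congr 1; ext x; rw [flux_expand, Finset.mul_sum]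
    · intro i _
      exact hψ.int_mul ((hF i).mul
        (((hD k).1.continuous_fderiv one_ne_zero).clm_apply continuous_const))
  simp_rw [hs]
  have := tendsto_finsetSum (Finset.univ : Finset (Fin d)) (fun i _ =>
    weak_scalar hp hψ hψ0 (hF i) (EuclideanSpace.single i 1) hD hS hψS h hB)
  simpa using this
end tools

end S3

section S4

section localmin

lemma vec_bound {H : Type*} [NormedAddCommGroup H] [InnerProductSpace ℝ H] {p : ℝ} (hp : 1 < p)
    {m : ℕ} (hm : p ≤ m) {κ : ℝ} (hκ : 0 < κ) (hκ1 : κ < 1) {c : ℝ} (hc : 0 ≤ c) (hc1 : c ≤ 1)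
    (U W G : H) (t : ℝ) :
    ‖(1 - c ^ m) • U + c ^ m • W + (t * (m * c ^ (m - 1))) • G‖ ^ p ≤
      (1 - c ^ m) * ‖U‖ ^ p + (1 - κ) ^ (1 - p) * (c ^ m * ‖W‖ ^ p) +
        κ ^ (1 - p) * (m : ℝ) ^ p * (‖G‖ ^ p * |t| ^ p) := by
  have hm2 : 2 ≤ m := by
    have : (1:ℝ) < m := by linarith
    have : 1 < m := by exact_mod_cast this
    omega
  have hp0 : 0 < p := by linarith
  have hk1 : 0 < 1 - κ := by linarith
  rcases hc.eq_or_lt with h0 | hcpos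
  · subst h0
    have e1 : (0:ℝ) ^ m = 0 := zero_pow (by omega)
    have e2 : (0:ℝ) ^ (m - 1) = 0 := zero_pow (by omega)
    rw [e1, e2]
    simp only [sub_zero, one_smul, zero_smul, mul_zero, add_zero, zero_mul, one_mul]
    have : 0 ≤ κ ^ (1 - p) * (m : ℝ) ^ p * (‖G‖ ^ p * |t| ^ p) := by positivity
    linarith
  · have hcm : c ^ m ≤ 1 := pow_le_one₀ hc hc1
    have hcm0 : 0 < c ^ m := by positivity
    have key := norm_rpow_convex3 hp (r := 1 - c ^ m) (s := c ^ m * (1 - κ)) (t := κ * c ^ m)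
      (by linarith) (by positivity) (by positivity) (by ring) (x := U) (y := (1 - κ)⁻¹ • W)
      (z := (t * m / (κ * c)) • G)
    have e1 : (c ^ m * (1 - κ)) • ((1 - κ)⁻¹ • W) = c ^ m • W := by
      rw [smul_smul]; congr 1; field_simp
    have e2 : (κ * c ^ m) • ((t * m / (κ * c)) • G) = (t * (m * c ^ (m - 1))) • G := by
      rw [smul_smul]; congr 1
      have : c ^ m = c ^ (m - 1) * c := by rw [← pow_succ]; congr 1; omega
      rw [this]; field_simp
    rw [e1, e2] at key
    refine key.trans ?_
    have b1 : c ^ m * (1 - κ) * ‖(1 - κ)⁻¹ • W‖ ^ p = (1 - κ) ^ (1 - p) * (c ^ m * ‖W‖ ^ p) := by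
      rw [norm_smul, Real.mul_rpow (norm_nonneg _) (norm_nonneg _), Real.norm_of_nonneg (by positivity),
        Real.inv_rpow hk1.le, Real.rpow_sub hk1, Real.rpow_one]
      field_simp
    have b2 : κ * c ^ m * ‖(t * m / (κ * c)) • G‖ ^ p ≤
        κ ^ (1 - p) * (m : ℝ) ^ p * (‖G‖ ^ p * |t| ^ p) := by
      have hcp : c ^ (m:ℝ) ≤ c ^ p := Real.rpow_le_rpow_of_exponent_ge hcpos hc1 hm
      rw [Real.rpow_natCast] at hcp
      have hcp0 : 0 < c ^ p := by positivity
      rw [norm_smul, Real.mul_rpow (norm_nonneg _) (norm_nonneg _), norm_div, norm_mul, norm_mul,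
        Real.norm_of_nonneg hκ.le, Real.norm_of_nonneg hc, Real.norm_eq_abs, Real.norm_natCast,
        Real.div_rpow (by positivity) (by positivity), Real.mul_rpow (by positivity) (by positivity),
        Real.mul_rpow (by positivity) (by positivity), Real.rpow_sub hκ, Real.rpow_one]
      have hkp : 0 < κ ^ p := by positivity
      have : κ * c ^ m * (|t| ^ p * (m:ℝ) ^ p / (κ ^ p * c ^ p) * ‖G‖ ^ p) =
        (c ^ m / c ^ p) * (κ / κ ^ p * (m:ℝ) ^ p * (‖G‖ ^ p * |t| ^ p)) := by field_simp
      rw [this]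
      have h1 : c ^ m / c ^ p ≤ 1 := by rw [div_le_one hcp0]; exact hcp
      exact mul_le_of_le_one_left (by positivity) h1
    linarith

variable {d : ℕ} {Ω : Set (Euc d)}

lemma local_min_global (hΩ : IsOpen Ω) {p : ℝ} (hp : 1 < p) {V : Euc d → ℝ}
    (hV : LocBddPotential Ω V) (hQ : ∀ f, C1c Ω f → 0 ≤ energyQ Ω V p f)
    {w φ χ : Euc d → ℝ} (hw : C1c Ω w) (hφ : C1c Ω φ) (hχ : C1c Ω χ)
    (hχ0 : ∀ x, 0 ≤ χ x) (hχ1 : ∀ x, χ x ≤ 1) (hχφ : ∀ x ∈ tsupport φ, χ =ᶠ[𝓝 x] fun _ => 1)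
    {u : ℕ → Euc d → ℝ} (hu : ∀ k, C1c Ω (u k))
    (hQu : Tendsto (fun k => energyQ Ω V p (u k)) atTop (𝓝 0))
    (hlim : Tendsto (fun k => ∫ x in tsupport χ, |u k x - w x| ^ p) atTop (𝓝 0)) :
    0 ≤ ∫ x, ((‖gradient w x + gradient φ x‖ ^ p - ‖gradient w x‖ ^ p)
      + V x * (|w x + φ x| ^ p - |w x| ^ p)) := by
  have hp0 : 0 < p := by linarith
  have hpn : p ≠ 0 := hp0.ne'
  set m : ℕ := ⌈p⌉₊ with hmdef
  have hm : p ≤ m := Nat.le_ceil p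
  have hm0 : m ≠ 0 := by
    intro h; rw [h] at hm; norm_num at hm; linarith
  set ψ : Euc d → ℝ := fun x => χ x ^ m with hψdef
  have hψC : ContDiff ℝ 1 ψ := hχ.1.pow m
  have hψ0 : ∀ x, 0 ≤ ψ x := fun x => pow_nonneg (hχ0 x) m
  have hψ1 : ∀ x, ψ x ≤ 1 := fun x => pow_le_one₀ (hχ0 x) (hχ1 x)
  have hts : tsupport ψ ⊆ tsupport χ := by
    refine closure_mono fun x hx => ?_
    intro h; apply hx; simp [hψdef, h, hm0]
  set S := tsupport χ with hSdef
  have hS : IsCompact S := hχ.2.1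
  have hψ : C1c Ω ψ := ⟨hψC, hS.of_isClosed_subset (isClosed_tsupport _) hts, hts.trans hχ.2.2⟩
  have hψoff : ∀ x ∉ S, ψ x = 0 := fun x hx => C1c.zero_off fun h => hx (hts h)
  have hφS : ∀ x, x ∉ S → φ x = 0 := by
    intro x hx
    apply C1c.zero_off
    intro h
    have := (hχφ x h).eq_of_nhds
    rw [C1c.zero_off hx] at this
    norm_num at this
  have hψφ : ∀ x ∈ tsupport φ, ψ x = 1 := fun x hx => by
    simp [hψdef, (hχφ x hx).eq_of_nhds]
  have hgχφ : ∀ x, φ x • gradient χ x = 0 := by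
    intro x
    by_cases hx : x ∈ tsupport φ
    · rw [(hχφ x hx).gradient_eq]; simp
    · rw [C1c.zero_off hx, zero_smul]
  have hwφ : C1c Ω (fun x => w x + φ x) := hw.add hφ
  have hdf : ∀ {f : Euc d → ℝ}, C1c Ω f → ∀ x, DifferentiableAt ℝ f x := fun hf x =>
    (hf.1.differentiable one_ne_zero) x
  set f : ℕ → Euc d → ℝ := fun k x => u k x * (1 - ψ x) + ψ x * (w x + φ x) with hfdef
  have hf : ∀ k, C1c Ω (f k) := fun k =>
    ((hu k).mul (contDiff_const.sub hψC)).add (hψ.mul hwφ.1)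
  have hgψ : ∀ x, gradient ψ x = (m * χ x ^ (m - 1)) • gradient χ x := fun x =>
    grad_comp (φ := fun s => s ^ m) (hasDerivAt_pow m (χ x)) (hdf hχ x)
  have hgf : ∀ k x, gradient (f k) x = (1 - χ x ^ m) • gradient (u k) x
      + χ x ^ m • (gradient w x + gradient φ x)
      + ((w x - u k x) * (m * χ x ^ (m - 1))) • gradient χ x := by
    intro k x
    have d1 : DifferentiableAt ℝ (fun x => 1 - ψ x) x := (hdf hψ x).const_sub 1
    have g1 : gradient (fun x => 1 - ψ x) x = - gradient ψ x := by
      rw [grad_sub (f := fun _ => (1:ℝ)) (differentiableAt_const _) (hdf hψ x)]; simp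
    rw [hfdef]
    simp only
    rw [grad_add ((hdf (hu k) x).fun_mul d1) ((hdf hψ x).fun_mul (hdf hwφ x)),
      grad_mul (hdf (hu k) x) d1, grad_mul (hdf hψ x) (hdf hwφ x), grad_add (hdf hw x) (hdf hφ x),
      g1, hgψ]
    have := congrArg (fun z => (m * χ x ^ (m - 1)) • z) (hgχφ x)
    simp only [smul_zero, smul_smul] at this
    have h2 : (w x + φ x) • ((m * χ x ^ (m - 1)) • gradient χ x) =
        (w x * (m * χ x ^ (m - 1))) • gradient χ x := by
      rw [add_smul, smul_smul, smul_smul, mul_comm (φ x), this, add_zero]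
    rw [h2, smul_neg, smul_smul]
    simp only [hψdef]
    module
  -- energies
  set E : ℕ → ℝ := fun k => ∫ x, ‖gradient χ x‖ ^ p * |w x - u k x| ^ p with hE
  set A := ∫ x, ψ x * ‖gradient w x + gradient φ x‖ ^ p with hA
  set J : ℕ → ℝ := fun k => ∫ x, ψ x * ‖gradient (u k) x‖ ^ p with hJ
  have iA : Integrable (fun x => ψ x * ‖gradient w x + gradient φ x‖ ^ p) :=
    hψ.int_mul (((grad_continuous hw.1).add (grad_continuous hφ.1)).norm.rpow_const
      fun _ => Or.inr hp0.le)
  have iJ : ∀ k, Integrable (fun x => ψ x * ‖gradient (u k) x‖ ^ p) := fun k =>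
    hψ.int_mul ((hu k).cont_grad hp)
  have iE : ∀ k, Integrable (fun x => ‖gradient χ x‖ ^ p * |w x - u k x| ^ p) := by
    intro k
    refine int_of_cont hS ((hχ.cont_grad hp).mul
      (cont_rpow hp (hw.sub (hu k)).1.continuous)).continuousOn fun x hx => ?_
    rw [grad_eq_zero hx]; simp [Real.zero_rpow hpn]
  have hEto : Tendsto E atTop (𝓝 0) := by
    obtain ⟨M, hM⟩ := (grad_continuous hχ.1).norm.bounded_above_of_compact_support
      (HasCompactSupport.intro' hS (isClosed_tsupport χ) fun x hx => by rw [grad_eq_zero hx, norm_zero])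
    have hM' : ∀ x, ‖gradient χ x‖ ≤ M := fun x => by simpa using hM x
    have hle : ∀ k, E k ≤ M ^ p * ∫ x in S, |u k x - w x| ^ p := by
      intro k
      rw [hE]; simp only
      rw [← setIntegral_eq_integral_of_forall_compl_eq_zero (s := S), ← integral_const_mul]
      · refine integral_mono (iE k).integrableOn
          (((cont_rpow hp ((hu k).sub hw).1.continuous).continuousOn.integrableOn_compact hS).const_mul _)
          fun x => ?_
        simp only
        rw [abs_sub_comm]
        gcongr
        exact hM' x
      · intro x hx
        rw [grad_eq_zero hx]; simp [Real.zero_rpow hpn]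
    refine squeeze_zero (fun k => integral_nonneg fun x => by positivity) hle ?_
    simpa using hlim.const_mul (M ^ p)
  set R := (∫ x in S, V x * |w x + φ x| ^ p) - ∫ x in S, V x * |w x| ^ p with hR
  have hRto : Tendsto (fun k => (∫ x, V x * |f k x| ^ p) - ∫ x, V x * |u k x| ^ p) atTop (𝓝 R) := by
    have e : ∀ k, (∫ x, V x * |f k x| ^ p) - ∫ x, V x * |u k x| ^ p =
        (∫ x in S, V x * |f k x| ^ p) - ∫ x in S, V x * |u k x| ^ p := by
      intro k
      rw [← integral_sub ((hf k).int_V hp hV) ((hu k).int_V hp hV),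
        ← integral_sub ((hf k).int_V hp hV).integrableOn ((hu k).int_V hp hV).integrableOn]
      rw [setIntegral_eq_integral_of_forall_compl_eq_zero]
      intro x hx
      simp [hfdef, hψoff x hx]
    simp_rw [e]
    obtain ⟨C, hC⟩ := hV.2 S hχ.2.2 hS
    have hCae : ∀ᵐ x ∂(volume.restrict S), |V x| ≤ C := by
      filter_upwards [ae_restrict_mem hS.measurableSet] with x hx using hC x hx
    have ci : ∀ {g : Euc d → ℝ}, C1c Ω g → Integrable (fun x => |g x| ^ p) (volume.restrict S) :=
      fun hg => (hg.int_pow hp).integrableOn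
    refine Tendsto.sub ?_ ?_
    · refine lp_tendsto hp (fun k => ci (hf k)) (ci hwφ) (fun k => ci ((hf k).sub hwφ)) ?_
        hV.1.aestronglyMeasurable hCae
      refine squeeze_zero (fun k => integral_nonneg fun x => by positivity) (fun k => ?_) hlim
      refine integral_mono (ci ((hf k).sub hwφ)) (ci ((hu k).sub hw)) fun x => ?_
      simp only
      have e1 : f k x - (w x + φ x) = (1 - ψ x) * (u k x - w x) := by
        have : (1 - ψ x) * φ x = 0 := by
          by_cases hx : x ∈ tsupport φ
          · rw [hψφ x hx]; ring
          · rw [C1c.zero_off hx]; ring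
        simp only [hfdef]
        linear_combination (-1) * this
      rw [e1, abs_mul]
      gcongr
      apply mul_le_of_le_one_left (abs_nonneg _)
      rw [abs_le]; constructor <;> linarith [hψ0 x, hψ1 x]
    · exact lp_tendsto hp (fun k => ci (hu k)) (ci hw) (fun k => ci ((hu k).sub hw)) hlim
        hV.1.aestronglyMeasurable hCae
  -- the main inequality
  have main : ∀ κ : ℝ, 0 < κ → κ < 1 → ∀ k, J k ≤ energyQ Ω V p (u k) + (1 - κ) ^ (1 - p) * A
      + κ ^ (1 - p) * (m:ℝ) ^ p * E k
      + ((∫ x, V x * |f k x| ^ p) - ∫ x, V x * |u k x| ^ p) := by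
    intro κ hκ hκ1 k
    have h0 := hQ _ (hf k)
    rw [(hf k).energy_add hp hV] at h0
    rw [(hu k).energy_add hp hV]
    have i1 : Integrable (fun x => (1 - χ x ^ m) * ‖gradient (u k) x‖ ^ p) := by
      have := ((hu k).int_grad hp).sub (iJ k)
      refine this.congr (Eventually.of_forall fun x => ?_)
      simp [hψdef]; ring
    have i2 : Integrable (fun x => (1 - κ) ^ (1 - p) *
        (χ x ^ m * ‖gradient w x + gradient φ x‖ ^ p)) := iA.const_mul _
    have i12 : Integrable (fun x => (1 - χ x ^ m) * ‖gradient (u k) x‖ ^ p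
        + (1 - κ) ^ (1 - p) * (χ x ^ m * ‖gradient w x + gradient φ x‖ ^ p)) := i1.add i2
    have h1 : ∫ x, ‖gradient (f k) x‖ ^ p ≤ ∫ x, ((1 - χ x ^ m) * ‖gradient (u k) x‖ ^ p
        + (1 - κ) ^ (1 - p) * (χ x ^ m * ‖gradient w x + gradient φ x‖ ^ p)
        + κ ^ (1 - p) * (m : ℝ) ^ p * (‖gradient χ x‖ ^ p * |w x - u k x| ^ p)) := by
      refine integral_mono ((hf k).int_grad hp)
        (i12.add ((iE k).const_mul _)) fun x => ?_
      simp only [hgf]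
      exact vec_bound hp hm hκ hκ1 (hχ0 x) (hχ1 x) _ _ _ _
    rw [integral_add i12 ((iE k).const_mul _), integral_add i1 i2, integral_const_mul, integral_const_mul] at h1
    have h2 : ∫ x, (1 - χ x ^ m) * ‖gradient (u k) x‖ ^ p =
        (∫ x, ‖gradient (u k) x‖ ^ p) - J k := by
      rw [hJ]; simp only
      rw [← integral_sub ((hu k).int_grad hp) (iJ k)]
      congr 1; ext x; simp [hψdef]; ring
    rw [h2] at h1
    have : ∫ x, χ x ^ m * ‖gradient w x + gradient φ x‖ ^ p = A := rfl
    rw [this] at h1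
    have : ∫ x, ‖gradient χ x‖ ^ p * |w x - u k x| ^ p = E k := rfl
    rw [this] at h1
    linarith
  have mainlim : ∀ κ : ℝ, Tendsto (fun k => energyQ Ω V p (u k) + (1 - κ) ^ (1 - p) * A
      + κ ^ (1 - p) * (m:ℝ) ^ p * E k
      + ((∫ x, V x * |f k x| ^ p) - ∫ x, V x * |u k x| ^ p)) atTop
        (𝓝 ((1 - κ) ^ (1 - p) * A + R)) := by
    intro κ
    have := ((hQu.add_const ((1 - κ) ^ (1 - p) * A)).add
      (hEto.const_mul (κ ^ (1 - p) * (m:ℝ) ^ p))).add hRto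
    simpa using this
  -- weak convergence
  set G := ∫ x, ψ x * ‖gradient w x‖ ^ p with hG
  have iG : Integrable (fun x => ψ x * ‖gradient w x‖ ^ p) := hψ.int_mul (hw.cont_grad hp)
  have hJB : ∃ B, ∀ k, J k ≤ B := by
    obtain ⟨B, hB⟩ := (mainlim (1/2)).bddAbove_range
    exact ⟨B, fun k => (main (1/2) (by norm_num) (by norm_num) k).trans (hB ⟨k, rfl⟩)⟩
  obtain ⟨B, hB⟩ := hJB
  have hDB : ∀ k, ∫ x, ψ x * ‖gradient (fun y => u k y - w y) x‖ ^ p ≤ 2 ^ p * (B + G) := by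
    intro k
    calc _ ≤ ∫ x, 2 ^ p * (ψ x * ‖gradient (u k) x‖ ^ p + ψ x * ‖gradient w x‖ ^ p) := by
          refine integral_mono (hψ.int_mul (((hu k).sub hw).cont_grad hp))
            (((iJ k).add iG).const_mul _) fun x => ?_
          simp only
          rw [grad_sub (hdf (hu k) x) (hdf hw x)]
          have := add_rpow_le hp (gradient (u k) x) (-gradient w x)
          rw [← sub_eq_add_neg, norm_neg] at this
          nlinarith [hψ0 x]
      _ = 2 ^ p * (J k + G) := by
          rw [integral_const_mul, integral_add (iJ k) iG]
      _ ≤ _ := by gcongr; exact hB k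
  have hweak := weak_flux hp hψ hψ0 (grad_continuous hw.1) (fun k => (hu k).sub hw) hS hts hlim hDB
  have hlow : ∀ k, G + ∫ x, ψ x * flux p (gradient w x) (gradient (fun y => u k y - w y) x) ≤ J k := by
    intro k
    have ifl : Integrable (fun x => ψ x * flux p (gradient w x) (gradient (fun y => u k y - w y) x)) :=
      hψ.int_mul ((flux_continuous hp).comp
        ((grad_continuous hw.1).prodMk (grad_continuous ((hu k).sub hw).1)))
    rw [hG, ← integral_add iG ifl]
    refine integral_mono (iG.add ifl) (iJ k) fun x => ?_
    simp only
    rw [grad_sub (hdf (hu k) x) (hdf hw x), ← mul_add]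
    exact mul_le_mul_of_nonneg_left (tangent_le hp _ _) (hψ0 x)
  have fin1 : ∀ κ : ℝ, 0 < κ → κ < 1 → G ≤ (1 - κ) ^ (1 - p) * A + R := by
    intro κ h0 h1
    have l1 : Tendsto (fun k => G + ∫ x, ψ x * flux p (gradient w x)
        (gradient (fun y => u k y - w y) x)) atTop (𝓝 G) := by
      simpa using hweak.const_add G
    exact le_of_tendsto_of_tendsto' l1 (mainlim κ) fun k => (hlow k).trans (main κ h0 h1 k)
  have fin2 : G ≤ A + R := by
    have hc : Tendsto (fun κ : ℝ => (1 - κ) ^ (1 - p) * A + R) (𝓝[>] 0) (𝓝 (A + R)) := by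
      have : ContinuousAt (fun κ : ℝ => (1 - κ) ^ (1 - p) * A + R) 0 := by
        have : ContinuousAt (fun κ : ℝ => (1 - κ) ^ (1 - p)) 0 :=
          (continuousAt_const.sub continuousAt_id).rpow_const (Or.inl (by simp))
        exact (this.mul continuousAt_const).add continuousAt_const
      have h := this.tendsto
      simp only [sub_zero, Real.one_rpow, one_mul] at h
      exact h.mono_left nhdsWithin_le_nhds
    refine ge_of_tendsto hc ?_
    filter_upwards [Ioo_mem_nhdsGT (show (0:ℝ) < 1 by norm_num)] with κ hκ
    exact fin1 κ hκ.1 hκ.2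
  -- conclusion
  have iV1 := hwφ.int_V hp hV
  have iV2 := hw.int_V hp hV
  have ic1 : Integrable (fun x => ‖gradient w x + gradient φ x‖ ^ p - ‖gradient w x‖ ^ p) := by
    refine (iA.sub iG).congr (Eventually.of_forall fun x => ?_)
    simp only [Pi.sub_apply]
    by_cases hx : x ∈ tsupport φ
    · rw [hψφ x hx]; ring
    · rw [grad_eq_zero hx]; simp
  have e1 : ∫ x, (‖gradient w x + gradient φ x‖ ^ p - ‖gradient w x‖ ^ p) = A - G := by
    rw [hA, hG, ← integral_sub iA iG]
    congr 1; ext x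
    by_cases hx : x ∈ tsupport φ
    · rw [hψφ x hx]; ring
    · rw [grad_eq_zero hx]; simp
  have ic2 : Integrable (fun x => V x * (|w x + φ x| ^ p - |w x| ^ p)) := by
    refine (iV1.sub iV2).congr (Eventually.of_forall fun x => ?_)
    simp only [Pi.sub_apply]; ring
  have e2 : ∫ x, V x * (|w x + φ x| ^ p - |w x| ^ p) = R := by
    rw [hR, ← integral_sub iV1.integrableOn iV2.integrableOn,
      setIntegral_eq_integral_of_forall_compl_eq_zero]
    · congr 1; ext x; ring
    · intro x hx; rw [hφS x hx]; simp
  rw [integral_add ic1 ic2, e1, e2]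
  linarith
end localmin

end S4

section S5

section super
variable {d : ℕ} {Ω : Set (Euc d)}

lemma local_min (hΩ : IsOpen Ω) {p : ℝ} (hp : 1 < p) {V : Euc d → ℝ}
    (hV : LocBddPotential Ω V) (hQ : ∀ f, C1c Ω f → 0 ≤ energyQ Ω V p f)
    {v φ : Euc d → ℝ} (hv : ContDiffOn ℝ 1 v Ω) (hφ : C1c Ω φ)
    {u : ℕ → Euc d → ℝ} (hu : ∀ k, C1c Ω (u k))
    (hQu : Tendsto (fun k => energyQ Ω V p (u k)) atTop (𝓝 0))
    (hlim : ∀ K : Set (Euc d), K ⊆ Ω → IsCompact K →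
        Tendsto (fun k => ∫ x in K, |u k x - v x| ^ p) atTop (𝓝 0)) :
    0 ≤ ∫ x, ((‖gradient v x + gradient φ x‖ ^ p - ‖gradient v x‖ ^ p)
      + V x * (|v x + φ x| ^ p - |v x| ^ p)) := by
  obtain ⟨χ, hχ, hχ0, hχ1, hχφ⟩ := exists_cutoff hΩ hφ.2.1 hφ.2.2
  obtain ⟨ξ, hξ, hξ0, hξ1, hξχ⟩ := exists_cutoff hΩ hχ.2.1 hχ.2.2
  have hw : C1c Ω (fun x => ξ x * v x) := hξ.mul_on hΩ hv
  have hev : ∀ x ∈ tsupport χ, (fun x => ξ x * v x) =ᶠ[𝓝 x] v := fun x hx => by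
    filter_upwards [hξχ x hx] with y hy
    rw [hy, one_mul]
  have hφχ : ∀ x ∈ tsupport φ, x ∈ tsupport χ := by
    intro x hx
    by_contra h
    have := (hχφ x hx).eq_of_nhds
    rw [C1c.zero_off h] at this
    norm_num at this
  have key := local_min_global hΩ hp hV hQ hw hφ hχ hχ0 hχ1 hχφ hu hQu (by
    refine (hlim _ hχ.2.2 hχ.2.1).congr fun k => ?_
    refine setIntegral_congr_fun hχ.2.1.measurableSet fun x hx => ?_
    have := (hξχ x hx).eq_of_nhds
    simp [this])
  refine key.trans_eq ?_
  congr 1; ext x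
  by_cases hx : x ∈ tsupport φ
  · have h1 := (hev x (hφχ x hx)).gradient_eq
    have h2 := (hev x (hφχ x hx)).eq_of_nhds
    rw [h1]
    rw [h2]
  · rw [grad_eq_zero hx, C1c.zero_off hx]; simp

lemma quot_abs {H : Type*} [NormedAddCommGroup H] [InnerProductSpace ℝ H] {p : ℝ} (hp : 1 < p)
    (a b : H) {s : ℝ} (hs : 0 < s) (hs1 : s ≤ 1) :
    |(‖a + s • b‖ ^ p - ‖a‖ ^ p) / s| ≤ |flux p a b| + |‖a + b‖ ^ p - ‖a‖ ^ p| := by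
  obtain ⟨h1, h2⟩ := quot_bounds hp a b hs hs1
  rw [abs_le]
  constructor
  · linarith [neg_abs_le (flux p a b), abs_nonneg (‖a + b‖ ^ p - ‖a‖ ^ p)]
  · linarith [le_abs_self (‖a + b‖ ^ p - ‖a‖ ^ p), abs_nonneg (flux p a b)]

lemma supersol (hΩ : IsOpen Ω) {p : ℝ} (hp : 1 < p) {V : Euc d → ℝ}
    (hV : LocBddPotential Ω V) {v φ : Euc d → ℝ} (hv : ContDiffOn ℝ 1 v Ω) (hφ : C1c Ω φ)
    (hmin : ∀ φ, C1c Ω φ → 0 ≤ ∫ x, ((‖gradient v x + gradient φ x‖ ^ p - ‖gradient v x‖ ^ p)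
      + V x * (|v x + φ x| ^ p - |v x| ^ p))) :
    0 ≤ ∫ x, (flux p (gradient v x) (gradient φ x) + V x * flux p (v x) (φ x)) := by
  have hp0 : 0 < p := by linarith
  set K := tsupport φ with hK
  have hKc : IsCompact K := hφ.2.1
  have hgv : ContinuousOn (gradient v) K := (grad_continuousOn hΩ hv).mono hφ.2.2
  have hvc : ContinuousOn v K := hv.continuousOn.mono hφ.2.2
  have hgφ : ContinuousOn (gradient φ) K := (grad_continuous hφ.1).continuousOn
  have hφc : ContinuousOn φ K := hφ.1.continuous.continuousOn
  have z1 : ∀ x ∉ K, gradient φ x = 0 := fun x hx => grad_eq_zero hx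
  have z2 : ∀ x ∉ K, φ x = 0 := fun x hx => C1c.zero_off hx
  have pc : ∀ {f : Euc d → Euc d}, ContinuousOn f K → ContinuousOn (fun x => ‖f x‖ ^ p) K :=
    fun hf => hf.norm.rpow_const fun _ _ => Or.inr hp0.le
  have pc' : ∀ {f : Euc d → ℝ}, ContinuousOn f K → ContinuousOn (fun x => ‖f x‖ ^ p) K :=
    fun hf => hf.norm.rpow_const fun _ _ => Or.inr hp0.le
  have f0 : ∀ {H : Type} [NormedAddCommGroup H] [InnerProductSpace ℝ H] (a : H), flux p a 0 = 0 := by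
    intro H _ _ a; simp [flux]
  have iB1 : Integrable (fun x => |flux p (gradient v x) (gradient φ x)|
      + |‖gradient v x + gradient φ x‖ ^ p - ‖gradient v x‖ ^ p|) := by
    refine int_of_cont hKc (ContinuousOn.add ?_ ?_) ?_
    · exact ((flux_continuous hp).comp_continuousOn (hgv.prodMk hgφ)).abs
    · exact ((pc (hgv.add hgφ)).sub (pc hgv)).abs
    · intro x hx; rw [z1 x hx]; simp [f0]
  have iB2 : Integrable (fun x => |flux p (v x) (φ x)| + |‖v x + φ x‖ ^ p - ‖v x‖ ^ p|) := by
    refine int_of_cont hKc (ContinuousOn.add ?_ ?_) ?_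
    · exact ((flux_continuous hp).comp_continuousOn (hvc.prodMk hφc)).abs
    · exact ((pc' (hvc.add hφc)).sub (pc' hvc)).abs
    · intro x hx; rw [z2 x hx]; simp [f0]
  have iB2V := (locbdd_int hV hKc hφ.2.2 iB2 (by intro x hx; rw [z2 x hx]; simp [f0])).abs
  set s : ℕ → ℝ := fun n => 1 / ((n:ℝ) + 1) with hs
  have hs0 : ∀ n, 0 < s n := fun n => by positivity
  have hs1 : ∀ n, s n ≤ 1 := fun n => by
    rw [hs]; simp only; rw [div_le_one (by positivity)]
    linarith [(Nat.cast_nonneg n : (0:ℝ) ≤ n)]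
  set g : ℕ → Euc d → ℝ := fun n x =>
    (‖gradient v x + s n • gradient φ x‖ ^ p - ‖gradient v x‖ ^ p) / s n
      + V x * ((‖v x + s n • φ x‖ ^ p - ‖v x‖ ^ p) / s n) with hg
  have hgm : ∀ n, Integrable (g n) := by
    intro n
    refine Integrable.add ?_ ?_
    · refine int_of_cont hKc (((pc (hgv.add (hgφ.const_smul (s n)))).sub (pc hgv)).div_const _) ?_
      intro x hx; rw [z1 x hx]; simp
    · refine locbdd_int hV hKc hφ.2.2 (int_of_cont hKc
        (((pc' (hvc.add (hφc.const_smul (s n)))).sub (pc' hvc)).div_const _) ?_) ?_ <;>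
      · intro x hx; rw [z2 x hx]; simp
  have hlim : Tendsto (fun n => ∫ x, g n x) atTop
      (𝓝 (∫ x, (flux p (gradient v x) (gradient φ x) + V x * flux p (v x) (φ x)))) := by
    refine tendsto_integral_of_dominated_convergence _ (fun n => (hgm n).aestronglyMeasurable)
      (iB1.add iB2V) (fun n => Eventually.of_forall fun x => ?_) (Eventually.of_forall fun x => ?_)
    · refine (norm_add_le _ _).trans (add_le_add ?_ ?_)
      · exact quot_abs hp _ _ (hs0 n) (hs1 n)
      · simp only
        rw [Real.norm_eq_abs, abs_mul, abs_mul]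
        refine mul_le_mul_of_nonneg_left ?_ (abs_nonneg _)
        exact (quot_abs hp _ _ (hs0 n) (hs1 n)).trans (le_abs_self _)
    · exact (quot_tendsto hp _ _).add ((quot_tendsto hp _ _).const_mul _)
  refine ge_of_tendsto' hlim fun n => ?_
  have h0 := hmin (fun x => s n * φ x) ⟨contDiff_const.mul hφ.1, hφ.2.1.mul_left,
    (tsupport_mul_subset_right).trans hφ.2.2⟩
  have e : ∫ x, g n x = (1 / s n) * ∫ x, ((‖gradient v x + gradient (fun x => s n * φ x) x‖ ^ p
      - ‖gradient v x‖ ^ p) + V x * (|v x + s n * φ x| ^ p - |v x| ^ p)) := by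
    rw [← integral_const_mul]
    congr 1; ext x
    rw [grad_const_mul (s n) ((hφ.1.differentiable one_ne_zero) x)]
    simp only [hg, Real.norm_eq_abs, smul_eq_mul]
    ring
  rw [e]
  exact mul_nonneg (by have := hs0 n; positivity) h0
end super

end S5

section S6

section picone
variable {d : ℕ} {Ω : Set (Euc d)}

/-- the weak supersolution property used below -/
def Super (Ω : Set (Euc d)) (V : Euc d → ℝ) (p : ℝ) (v : Euc d → ℝ) : Prop :=
  ∀ φ, C1c Ω φ → 0 ≤ ∫ x, (flux p (gradient v x) (gradient φ x) + V x * flux p (v x) (φ x))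

lemma C1c.quot (hΩ : IsOpen Ω) {v u : Euc d → ℝ} (hv : ContDiffOn ℝ 1 v Ω)
    (hvpos : ∀ x ∈ Ω, 0 < v x) (hu : C1c Ω u) : C1c Ω (fun x => u x * (v x)⁻¹) :=
  hu.mul_on hΩ (hv.inv fun x hx => (hvpos x hx).ne')

lemma flux_continuousOn {X H : Type*} [TopologicalSpace X] [NormedAddCommGroup H]
    [InnerProductSpace ℝ H] {p : ℝ} (hp : 1 < p) {K : Set X} {a b : X → H}
    (ha : ContinuousOn a K) (hb : ContinuousOn b K) :
    ContinuousOn (fun x => flux p (a x) (b x)) K :=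
  (flux_continuous hp).comp_continuousOn (ha.prodMk hb)

set_option maxHeartbeats 400000 in
lemma picone (hΩ : IsOpen Ω) {p : ℝ} (hp : 1 < p) {V : Euc d → ℝ}
    (hV : LocBddPotential Ω V) {v : Euc d → ℝ} (hv : ContDiffOn ℝ 1 v Ω)
    (hvpos : ∀ x ∈ Ω, 0 < v x) (hsup : Super Ω V p v) {u : Euc d → ℝ} (hu : C1c Ω u)
    (hu0 : ∀ x, 0 ≤ u x) {h : Euc d → ℝ} (hh : h = fun x => u x * (v x)⁻¹) :
    Integrable (fun x => ‖h x • gradient v x + v x • gradient h x‖ ^ p - ‖h x • gradient v x‖ ^ p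
        - flux p (h x • gradient v x) (v x • gradient h x)) ∧
    ∫ x, (‖h x • gradient v x + v x • gradient h x‖ ^ p - ‖h x • gradient v x‖ ^ p
        - flux p (h x • gradient v x) (v x • gradient h x)) ≤ energyQ Ω V p u := by
  have hp0 : 0 < p := by linarith
  have hC : C1c Ω h := by rw [hh]; exact hu.quot hΩ hv hvpos
  set K := tsupport h with hKdef
  have hKc : IsCompact K := hC.2.1
  have hKΩ : K ⊆ Ω := hC.2.2
  have hKu : K ⊆ tsupport u := by
    rw [hKdef, hh]; exact tsupport_mul_subset_left
  have hpos : ∀ x, 0 ≤ h x := by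
    intro x
    by_cases hx : x ∈ K
    · rw [hh]; exact mul_nonneg (hu0 x) (inv_nonneg.2 (hvpos x (hKΩ hx)).le)
    · rw [C1c.zero_off hx]
  have hz : ∀ x ∉ K, h x = 0 := fun x hx => C1c.zero_off hx
  have hgz : ∀ x ∉ K, gradient h x = 0 := fun x hx => grad_eq_zero hx
  have huh : ∀ x ∈ Ω, u x = h x * v x := fun x hx => by
    rw [hh]; have := (hvpos x hx).ne'; field_simp
  have hdv : ∀ x ∈ Ω, DifferentiableAt ℝ v x := fun x hx =>
    (hv.differentiableOn one_ne_zero).differentiableAt (hΩ.mem_nhds hx)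
  have hdh : ∀ x, DifferentiableAt ℝ h x := fun x => (hC.1.differentiable one_ne_zero) x
  have hgu : ∀ x ∈ Ω, gradient u x = h x • gradient v x + v x • gradient h x := by
    intro x hx
    have : u =ᶠ[𝓝 x] fun y => h y * v y := by
      filter_upwards [hΩ.mem_nhds hx] with y hy using huh y hy
    rw [this.gradient_eq, grad_mul (hdh x) (hdv x hx)]
  -- the test function
  have hhp : C1c Ω (fun x => h x ^ p) := by
    refine ⟨?_, ?_, ?_⟩
    · exact hC.1.rpow_const_of_le (m := 1) (by simpa using hp.le)
    · refine HasCompactSupport.intro' hKc (isClosed_tsupport _) fun x hx => ?_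
      rw [hz x hx, Real.zero_rpow hp0.ne']
    · refine (closure_mono ?_ : _ ⊆ K).trans hKΩ
      intro x hx hx0
      apply hx
      simp only
      rw [hx0, Real.zero_rpow hp0.ne']
  have hφ : C1c Ω (fun x => h x ^ p * v x) := hhp.mul_on hΩ hv
  have h0 := hsup _ hφ
  have hgφ : ∀ x ∈ Ω, gradient (fun x => h x ^ p * v x) x =
      h x ^ p • gradient v x + (p * h x ^ (p - 1)) • (v x • gradient h x) := by
    intro x hx
    rw [grad_mul ((hhp.1.differentiable one_ne_zero) x) (hdv x hx),
      grad_comp (φ := fun s => s ^ p) (Real.hasDerivAt_rpow_const (Or.inr hp.le)) (hdh x),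
      smul_comm]
  have hpt : ∀ x, flux p (gradient v x) (gradient (fun x => h x ^ p * v x) x)
      + V x * flux p (v x) (h x ^ p * v x) =
      p * (‖h x • gradient v x‖ ^ p + flux p (h x • gradient v x) (v x • gradient h x)
        + V x * |u x| ^ p) := by
    intro x
    by_cases hx : x ∈ Ω
    · rw [hgφ x hx, flux_add, flux_smul, flux_smul, flux_self hp, flux_smul_left hp _ _ (hpos x),
        norm_smul, Real.mul_rpow (norm_nonneg _) (norm_nonneg _), Real.norm_of_nonneg (hpos x),
        huh x hx, abs_of_nonneg (mul_nonneg (hpos x) (hvpos x hx).le),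
        Real.mul_rpow (hpos x) (hvpos x hx).le]
      have : flux p (v x) (h x ^ p * v x) = h x ^ p * (p * v x ^ p) := by
        have := flux_smul p (v x) (v x) (h x ^ p)
        rw [smul_eq_mul, flux_self hp, Real.norm_of_nonneg (hvpos x hx).le] at this
        exact this
      rw [this]; ring
    · have h1 : x ∉ K := fun h => hx (hKΩ h)
      have h2 : u x = 0 := C1c.zero_off fun h => hx (hu.2.2 h)
      have h3 : x ∉ tsupport (fun x => h x ^ p * v x) := fun h => hx (hφ.2.2 h)
      rw [grad_eq_zero h3, hz x h1, hgz x h1, h2]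
      simp [flux, Real.zero_rpow hp0.ne']
  simp_rw [hpt] at h0
  rw [integral_const_mul] at h0
  have h0' := (mul_nonneg_iff_of_pos_left hp0).1 h0
  have hgvK : ContinuousOn (gradient v) K := (grad_continuousOn hΩ hv).mono hKΩ
  have hvK : ContinuousOn v K := hv.continuousOn.mono hKΩ
  have ca : ContinuousOn (fun x => h x • gradient v x) K := hC.1.continuous.continuousOn.smul hgvK
  have cb : ContinuousOn (fun x => v x • gradient h x) K :=
    hvK.smul (grad_continuous hC.1).continuousOn
  have cf : ContinuousOn (fun x => flux p (h x • gradient v x) (v x • gradient h x)) K :=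
    flux_continuousOn hp ca cb
  have cn : ContinuousOn (fun x => ‖h x • gradient v x‖ ^ p) K :=
    ca.norm.rpow_const fun _ _ => Or.inr hp0.le
  have i1 : Integrable (fun x => ‖h x • gradient v x‖ ^ p
      + flux p (h x • gradient v x) (v x • gradient h x)) := by
    refine int_of_cont hKc (cn.add cf) fun x hx => ?_
    rw [hz x hx, hgz x hx]; simp [flux, Real.zero_rpow hp0.ne']
  have i2 := hu.int_V hp hV
  have hgu' : ∀ x, ‖gradient u x‖ ^ p = ‖h x • gradient v x + v x • gradient h x‖ ^ p := by
    intro x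
    by_cases hx : x ∈ Ω
    · rw [hgu x hx]
    · have h1 : x ∉ K := fun h => hx (hKΩ h)
      rw [grad_eq_zero fun h => hx (hu.2.2 h), hz x h1, hgz x h1]; simp
  have i3 : Integrable (fun x => ‖h x • gradient v x + v x • gradient h x‖ ^ p) :=
    (hu.int_grad hp).congr (Eventually.of_forall hgu')
  have i4 : Integrable (fun x => ‖h x • gradient v x + v x • gradient h x‖ ^ p
      - ‖h x • gradient v x‖ ^ p - flux p (h x • gradient v x) (v x • gradient h x)) := by
    refine (i3.sub i1).congr (Eventually.of_forall fun x => ?_)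
    simp only [Pi.sub_apply]; ring
  refine ⟨i4, ?_⟩
  rw [hu.energy_add hp hV]
  rw [integral_add i1 i2] at h0'
  have e : ∫ x, (‖h x • gradient v x + v x • gradient h x‖ ^ p - ‖h x • gradient v x‖ ^ p
        - flux p (h x • gradient v x) (v x • gradient h x)) = (∫ x, ‖gradient u x‖ ^ p) -
      ∫ x, (‖h x • gradient v x‖ ^ p + flux p (h x • gradient v x) (v x • gradient h x)) := by
    simp_rw [hgu']
    rw [← integral_sub i3 i1]
    congr 1; ext x; ring
  rw [e]; linarith

lemma grad_quot_bound (hΩ : IsOpen Ω) {p : ℝ} (hp : 1 < p) {V : Euc d → ℝ}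
    (hV : LocBddPotential Ω V) {v : Euc d → ℝ} (hv : ContDiffOn ℝ 1 v Ω)
    (hvpos : ∀ x ∈ Ω, 0 < v x) (hsup : Super Ω V p v) {K : Set (Euc d)} (hK : IsCompact K)
    (hKΩ : K ⊆ Ω) {δ : ℝ} (hδ : 0 < δ) :
    ∃ C : ℝ, 0 ≤ C ∧ ∀ u : Euc d → ℝ, C1c Ω u → (∀ x, 0 ≤ u x) →
      ∫ x in K, ‖gradient (fun y => u y * (v y)⁻¹) x‖ ^ p ≤
        C * energyQ Ω V p u + δ * ∫ x in K, |u x * (v x)⁻¹| ^ p := by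
  have hp0 : 0 < p := by linarith
  obtain ⟨c, hc0, hc⟩ : ∃ c, 0 < c ∧ ∀ x ∈ K, c ≤ v x := by
    rcases K.eq_empty_or_nonempty with rfl | hne
    · exact ⟨1, one_pos, by simp⟩
    · obtain ⟨x, hx, hmin⟩ := hK.exists_isMinOn hne (hv.continuousOn.mono hKΩ)
      exact ⟨v x, hvpos x (hKΩ hx), fun y hy => hmin hy⟩
  obtain ⟨M, hM⟩ := hK.exists_bound_of_continuousOn ((grad_continuousOn hΩ hv).mono hKΩ)
  have hcp : 0 < c ^ p := by positivity
  set δ' := δ * c ^ p / (|M| ^ p + 1) with hδ'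
  have hMp : 0 ≤ |M| ^ p := by positivity
  obtain ⟨C, hC0, hC⟩ := bregman_coercive (H := Euc d) hp (δ := δ') (by positivity)
  refine ⟨C / c ^ p, by positivity, fun u hu hu0 => ?_⟩
  set h : Euc d → ℝ := fun y => u y * (v y)⁻¹ with hh
  have hCh : C1c Ω h := hu.quot hΩ hv hvpos
  obtain ⟨i4, hle⟩ := picone hΩ hp hV hv hvpos hsup hu hu0 hh
  have hbn : ∀ x, 0 ≤ ‖h x • gradient v x + v x • gradient h x‖ ^ p - ‖h x • gradient v x‖ ^ p
        - flux p (h x • gradient v x) (v x • gradient h x) := by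
    intro x
    have := tangent_le hp (h x • gradient v x + v x • gradient h x) (h x • gradient v x)
    rw [add_sub_cancel_left] at this
    linarith
  have ih : IntegrableOn (fun x => |h x| ^ p) K := (hCh.int_pow hp).integrableOn
  have ig : IntegrableOn (fun x => ‖gradient h x‖ ^ p) K := (hCh.int_grad hp).integrableOn
  calc ∫ x in K, ‖gradient h x‖ ^ p ≤ ∫ x in K, (C / c ^ p * (‖h x • gradient v x + v x • gradient h x‖ ^ p
        - ‖h x • gradient v x‖ ^ p - flux p (h x • gradient v x) (v x • gradient h x))
        + δ * |h x| ^ p) := by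
        refine setIntegral_mono_on ig ((i4.integrableOn.const_mul _).add (ih.const_mul _))
          hK.measurableSet fun x hx => ?_
        have b1 := hC (h x • gradient v x) (v x • gradient h x)
        rw [norm_smul (v x), Real.mul_rpow (norm_nonneg _) (norm_nonneg _),
          Real.norm_of_nonneg (hvpos x (hKΩ hx)).le] at b1
        have b2 : c ^ p * ‖gradient h x‖ ^ p ≤ v x ^ p * ‖gradient h x‖ ^ p := by
          gcongr; exact hc x hx
        have b3 : δ' * ‖h x • gradient v x‖ ^ p ≤ δ * c ^ p * |h x| ^ p := by
          rw [norm_smul, Real.mul_rpow (norm_nonneg _) (norm_nonneg _), Real.norm_eq_abs]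
          have : ‖gradient v x‖ ^ p ≤ |M| ^ p + 1 := by
            have : ‖gradient v x‖ ^ p ≤ |M| ^ p := by
              gcongr; exact (hM x hx).trans (le_abs_self _)
            linarith
          calc δ' * (|h x| ^ p * ‖gradient v x‖ ^ p) ≤ δ' * (|h x| ^ p * (|M| ^ p + 1)) := by
                gcongr
            _ = _ := by rw [hδ']; field_simp
        have b4 := b2.trans (b1.trans (add_le_add_right b3 _))
        have b5 : ‖gradient h x‖ ^ p ≤ (C * (‖h x • gradient v x + v x • gradient h x‖ ^ p
            - ‖h x • gradient v x‖ ^ p - flux p (h x • gradient v x) (v x • gradient h x))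
            + δ * c ^ p * |h x| ^ p) / c ^ p := by
          rw [le_div_iff₀ hcp]; linarith
        refine b5.trans_eq ?_
        field_simp
    _ = C / c ^ p * (∫ x in K, (‖h x • gradient v x + v x • gradient h x‖ ^ p
        - ‖h x • gradient v x‖ ^ p - flux p (h x • gradient v x) (v x • gradient h x)))
        + δ * ∫ x in K, |h x| ^ p := by
        rw [integral_add (i4.integrableOn.const_mul _) (ih.const_mul _), integral_const_mul,
          integral_const_mul]
    _ ≤ _ := by
        gcongr
        exact (setIntegral_le_integral i4 (Eventually.of_forall hbn)).trans hle
end picone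

end S6

section S7

section poincare
variable {d : ℕ}

lemma seg_bound {p : ℝ} (hp : 1 < p) {g : Euc d → ℝ} (hg : ContDiff ℝ 1 g) {x0 : Euc d} {r : ℝ}
    (hr : 0 < r) {x y : Euc d} (hx : x ∈ Metric.closedBall x0 r) (hy : y ∈ Metric.closedBall x0 r) :
    ENNReal.ofReal (|g x - g y| ^ p) ≤ ENNReal.ofReal ((2 * r) ^ p) *
      ∫⁻ t in Set.Icc (0:ℝ) 1, (Metric.closedBall x0 r).indicator
        (fun z => ENNReal.ofReal (‖gradient g z‖ ^ p)) (y + t • (x - y)) := by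
  have hp0 : 0 < p := by linarith
  have hγ : Continuous (fun t : ℝ => y + t • (x - y)) := by fun_prop
  have hGc : Continuous (fun t : ℝ => ‖gradient g (y + t • (x - y))‖) :=
    ((grad_continuous hg).comp hγ).norm
  have hdg := hg.differentiable one_ne_zero
  have hder : ∀ t : ℝ, HasDerivAt (fun t : ℝ => g (y + t • (x - y)))
      (fderiv ℝ g (y + t • (x - y)) (x - y)) t := by
    intro t
    have h1 : HasDerivAt (fun t : ℝ => y + t • (x - y)) (x - y) t := by
      simpa using ((hasDerivAt_id t).smul_const (x - y)).const_add y
    exact (hdg _).hasFDerivAt.comp_hasDerivAt t h1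
  have hdc : Continuous (fun t : ℝ => fderiv ℝ g (y + t • (x - y)) (x - y)) :=
    ((hg.continuous_fderiv one_ne_zero).comp hγ).clm_apply continuous_const
  have ftc : ∫ t in (0:ℝ)..1, fderiv ℝ g (y + t • (x - y)) (x - y) = g x - g y := by
    rw [intervalIntegral.integral_eq_sub_of_hasDerivAt (fun t _ => hder t) (hdc.intervalIntegrable _ _)]
    simp
  have hxy : ‖x - y‖ ≤ 2 * r := by
    have := dist_triangle_right x y x0
    rw [← dist_eq_norm]
    have h1 := Metric.mem_closedBall.1 hx
    have h2 := Metric.mem_closedBall.1 hy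
    linarith
  have b1 : |g x - g y| ≤ 2 * r * ∫ t in Set.Icc (0:ℝ) 1, ‖gradient g (y + t • (x - y))‖ := by
    rw [← ftc, intervalIntegral.integral_of_le zero_le_one, ← integral_Icc_eq_integral_Ioc,
      ← integral_const_mul, ← Real.norm_eq_abs]
    refine norm_integral_le_of_norm_le ((hGc.integrableOn_Icc).const_mul _)
      (Eventually.of_forall fun t => ?_)
    refine ((fderiv ℝ g _).le_opNorm _).trans ?_
    rw [← norm_grad, mul_comm]
    gcongr
  have : IsProbabilityMeasure (volume.restrict (Set.Icc (0:ℝ) 1)) := ⟨by simp⟩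
  have hGp : Continuous (fun t : ℝ => ‖gradient g (y + t • (x - y))‖ ^ p) :=
    hGc.rpow_const fun _ => Or.inr hp0.le
  have b2 : (∫ t in Set.Icc (0:ℝ) 1, ‖gradient g (y + t • (x - y))‖) ^ p ≤
      ∫ t in Set.Icc (0:ℝ) 1, ‖gradient g (y + t • (x - y))‖ ^ p :=
    (convexOn_rpow hp.le).map_integral_le
      (continuous_id.rpow_const fun _ => Or.inr hp0.le).continuousOn isClosed_Ici
      (Eventually.of_forall fun t => norm_nonneg _) hGc.integrableOn_Icc hGp.integrableOn_Icc
  have b3 : |g x - g y| ^ p ≤ (2 * r) ^ p *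
      ∫ t in Set.Icc (0:ℝ) 1, ‖gradient g (y + t • (x - y))‖ ^ p := by
    have h0 : 0 ≤ ∫ t in Set.Icc (0:ℝ) 1, ‖gradient g (y + t • (x - y))‖ :=
      integral_nonneg fun _ => norm_nonneg _
    calc _ ≤ (2 * r * ∫ t in Set.Icc (0:ℝ) 1, ‖gradient g (y + t • (x - y))‖) ^ p := by gcongr
      _ = (2 * r) ^ p * (∫ t in Set.Icc (0:ℝ) 1, ‖gradient g (y + t • (x - y))‖) ^ p := by
          rw [Real.mul_rpow (by positivity) h0]
      _ ≤ _ := by gcongr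
  refine (ENNReal.ofReal_le_ofReal b3).trans ?_
  rw [ENNReal.ofReal_mul (by positivity), ofReal_integral_eq_lintegral_ofReal hGp.integrableOn_Icc
    (Eventually.of_forall fun _ => by positivity)]
  refine mul_le_mul_right (le_of_eq ?_) _
  refine setLIntegral_congr_fun measurableSet_Icc fun t ht => ?_
  rw [Set.indicator_of_mem]
  have := (convex_closedBall x0 r).add_smul_sub_mem hy hx ht
  exact this

lemma homothety_bound {F : Euc d → ENNReal} (hF : Measurable F) {t : ℝ} (ht : 1/2 ≤ t) (y : Euc d) :
    ∫⁻ x, F (t • x + y) ≤ 2 ^ d * ∫⁻ x, F x := by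
  have ht0 : 0 < t := by linarith
  have h1 : ∫⁻ x, F (t • x + y) = ENNReal.ofReal (abs (t ^ d)⁻¹) * ∫⁻ x, F (x + y) := by
    have := lintegral_map (μ := (volume : Measure (Euc d))) (f := fun z => F (z + y))
      (g := fun x => t • x) (hF.comp (measurable_id.add_const y)) (measurable_const_smul t)
    rw [← this, Measure.map_addHaar_smul _ ht0.ne', lintegral_smul_measure]
    simp
  rw [h1, lintegral_add_right_eq_self]
  refine mul_le_mul_left ?_ _
  rw [abs_of_pos (by positivity)]
  have : (t ^ d)⁻¹ ≤ 2 ^ d := by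
    rw [← inv_pow]
    gcongr
    rw [inv_le_comm₀ ht0 two_pos]; linarith
  refine (ENNReal.ofReal_le_ofReal this).trans ?_
  rw [ENNReal.ofReal_pow (by norm_num)]; simp

lemma poincare_lintegral {p : ℝ} (hp : 1 < p) (x0 : Euc d) {r : ℝ} (hr : 0 < r) :
    ∃ C : ℝ, 0 ≤ C ∧ ∀ g : Euc d → ℝ, ContDiff ℝ 1 g →
      ∫⁻ x in Metric.closedBall x0 r, ∫⁻ y in Metric.closedBall x0 r, ENNReal.ofReal (|g x - g y| ^ p)
        ≤ ENNReal.ofReal C * ∫⁻ x in Metric.closedBall x0 r, ENNReal.ofReal (‖gradient g x‖ ^ p) := by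
  set B := Metric.closedBall x0 r with hB
  have hBm : MeasurableSet B := Metric.isClosed_closedBall.measurableSet
  have hBfin : volume B ≠ ⊤ := (isCompact_closedBall x0 r).measure_lt_top.ne
  refine ⟨(2 * r) ^ p * (2 ^ d * (volume B).toReal), by positivity, fun g hg => ?_⟩
  set F : Euc d → ENNReal := B.indicator (fun z => ENNReal.ofReal (‖gradient g z‖ ^ p)) with hF
  have hFm : Measurable F :=
    (((grad_continuous hg).norm.measurable.pow_const p).ennreal_ofReal).indicator hBm
  have hFi : ∫⁻ x in B, ENNReal.ofReal (‖gradient g x‖ ^ p) = ∫⁻ x, F x := by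
    rw [hF, lintegral_indicator hBm]
  rw [hFi]
  have m3 : Measurable (fun q : (ℝ × Euc d) × Euc d => F (q.2 + q.1.1 • (q.1.2 - q.2))) :=
    hFm.comp (by fun_prop)
  have m3' : Measurable (fun q : (Euc d × Euc d) × ℝ => F (q.1.2 + q.2 • (q.1.1 - q.1.2))) :=
    hFm.comp (by fun_prop)
  have perT : ∀ t ∈ Set.Icc (0:ℝ) 1, ∫⁻ x in B, ∫⁻ y in B, F (y + t • (x - y)) ≤
      2 ^ d * (∫⁻ x, F x) * volume B := by
    intro t ht
    rcases le_total (1/2) t with h | h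
    · rw [lintegral_lintegral_swap]
      · calc _ ≤ ∫⁻ y in B, 2 ^ d * (∫⁻ x, F x) := by
              refine lintegral_mono fun y => ?_
              refine (setLIntegral_le_lintegral _ _).trans ?_
              have := homothety_bound hFm h ((1 - t) • y)
              refine (le_of_eq ?_).trans this
              congr 1; ext x; congr 1; module
          _ = _ := by rw [setLIntegral_const]
      · exact (hFm.comp (by fun_prop : Measurable fun q : Euc d × Euc d =>
          q.2 + t • (q.1 - q.2))).aemeasurable
    · calc _ ≤ ∫⁻ x in B, 2 ^ d * (∫⁻ x, F x) := by
              refine lintegral_mono fun x => ?_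
              refine (setLIntegral_le_lintegral _ _).trans ?_
              have := homothety_bound hFm (t := 1 - t) (by linarith) (t • x)
              refine (le_of_eq ?_).trans this
              congr 1; ext y; congr 1; module
          _ = _ := by rw [setLIntegral_const]
  calc _ ≤ ∫⁻ x in B, ∫⁻ y in B, ENNReal.ofReal ((2 * r) ^ p) *
        ∫⁻ t in Set.Icc (0:ℝ) 1, F (y + t • (x - y)) := by
        refine setLIntegral_mono' hBm fun x hx => setLIntegral_mono' hBm fun y hy => ?_
        exact seg_bound hp hg hr hx hy
    _ = ENNReal.ofReal ((2 * r) ^ p) * ∫⁻ x in B, ∫⁻ y in B,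
        ∫⁻ t in Set.Icc (0:ℝ) 1, F (y + t • (x - y)) := by
        rw [← lintegral_const_mul' _ _ ENNReal.ofReal_ne_top]
        refine lintegral_congr fun x => ?_
        rw [← lintegral_const_mul' _ _ ENNReal.ofReal_ne_top]
    _ = ENNReal.ofReal ((2 * r) ^ p) * ∫⁻ t in Set.Icc (0:ℝ) 1, ∫⁻ x in B, ∫⁻ y in B,
        F (y + t • (x - y)) := by
        congr 1
        rw [lintegral_lintegral_swap (μ := volume.restrict (Set.Icc (0:ℝ) 1))
          (f := fun t x => ∫⁻ y in B, F (y + t • (x - y)))]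
        · refine lintegral_congr fun x => ?_
          rw [lintegral_lintegral_swap]
          exact (hFm.comp (by fun_prop : Measurable fun q : Euc d × ℝ =>
            q.1 + q.2 • (x - q.1))).aemeasurable
        · exact (m3.lintegral_prod_right' (ν := volume.restrict B)).aemeasurable
    _ ≤ ENNReal.ofReal ((2 * r) ^ p) * ∫⁻ t in Set.Icc (0:ℝ) 1, 2 ^ d * (∫⁻ x, F x) * volume B := by
        exact mul_le_mul_right (setLIntegral_mono' measurableSet_Icc perT) _
    _ = _ := by
        rw [setLIntegral_const, Real.volume_Icc, ENNReal.ofReal_mul (by positivity),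
          ENNReal.ofReal_mul (by positivity), ENNReal.ofReal_toReal hBfin,
          ENNReal.ofReal_pow (by norm_num)]
        simp; ring

lemma poincare_E {p : ℝ} (hp : 1 < p) (x0 : Euc d) {r : ℝ} (hr : 0 < r) {x1 : Euc d} {r1 : ℝ}
    (hr1 : 0 < r1) (hE : Metric.closedBall x1 r1 ⊆ Metric.closedBall x0 r) :
    ∃ C : ℝ, 0 ≤ C ∧ ∀ g : Euc d → ℝ, ContDiff ℝ 1 g →
      ∫ x in Metric.closedBall x0 r, |g x| ^ p ≤
        C * ((∫ x in Metric.closedBall x1 r1, |g x| ^ p)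
          + ∫ x in Metric.closedBall x0 r, ‖gradient g x‖ ^ p) := by
  have hp0 : 0 < p := by linarith
  obtain ⟨C, hC0, hC⟩ := poincare_lintegral hp x0 hr
  set B := Metric.closedBall x0 r with hB
  set E := Metric.closedBall x1 r1 with hEd
  have hBm : MeasurableSet B := Metric.isClosed_closedBall.measurableSet
  have hBc : IsCompact B := isCompact_closedBall x0 r
  have hEc : IsCompact E := isCompact_closedBall x1 r1
  have hBfin : volume B ≠ ⊤ := hBc.measure_lt_top.ne
  have hEfin : volume E ≠ ⊤ := hEc.measure_lt_top.ne
  have hEpos : 0 < (volume E).toReal :=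
    ENNReal.toReal_pos (Metric.measure_closedBall_pos volume x1 hr1).ne' hEfin
  set b := (volume B).toReal
  set e := (volume E).toReal
  refine ⟨2 ^ p * (C + b) / e, by positivity, fun g hg => ?_⟩
  have cg : Continuous (fun x => |g x| ^ p) := cont_rpow hp hg.continuous
  have cgr : Continuous (fun x => ‖gradient g x‖ ^ p) :=
    (grad_continuous hg).norm.rpow_const fun _ => Or.inr hp0.le
  have c1 : ∀ K : Set (Euc d), IsCompact K → ∫⁻ x in K, ENNReal.ofReal (|g x| ^ p) =
      ENNReal.ofReal (∫ x in K, |g x| ^ p) := fun K hK =>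
    (ofReal_integral_eq_lintegral_ofReal (cg.continuousOn.integrableOn_compact hK)
      (Eventually.of_forall fun _ => by positivity)).symm
  have c2 : ∫⁻ x in B, ENNReal.ofReal (‖gradient g x‖ ^ p) =
      ENNReal.ofReal (∫ x in B, ‖gradient g x‖ ^ p) :=
    (ofReal_integral_eq_lintegral_ofReal (cgr.continuousOn.integrableOn_compact hBc)
      (Eventually.of_forall fun _ => by positivity)).symm
  have n1 : 0 ≤ ∫ x in E, |g x| ^ p := integral_nonneg fun _ => by positivity
  have n2 : 0 ≤ ∫ x in B, ‖gradient g x‖ ^ p := integral_nonneg fun _ => by positivity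
  have key : (∫⁻ x in B, ENNReal.ofReal (|g x| ^ p)) * volume E ≤ ENNReal.ofReal (2 ^ p) *
      ((∫⁻ x in B, ∫⁻ y in B, ENNReal.ofReal (|g x - g y| ^ p)) +
        (∫⁻ y in E, ENNReal.ofReal (|g y| ^ p)) * volume B) := by
    calc _ = ∫⁻ x in B, ∫⁻ y in E, ENNReal.ofReal (|g x| ^ p) := by
          simp_rw [setLIntegral_const]
          rw [lintegral_mul_const' _ _ hEfin]
      _ ≤ ∫⁻ x in B, ∫⁻ y in E, ENNReal.ofReal (2 ^ p) *
          (ENNReal.ofReal (|g x - g y| ^ p) + ENNReal.ofReal (|g y| ^ p)) := by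
          refine lintegral_mono fun x => lintegral_mono fun y => ?_
          rw [← ENNReal.ofReal_add (by positivity) (by positivity), ← ENNReal.ofReal_mul (by positivity)]
          refine ENNReal.ofReal_le_ofReal ?_
          have := add_rpow_le hp (g x - g y) (g y)
          simpa using this
      _ = ENNReal.ofReal (2 ^ p) * ∫⁻ x in B, ((∫⁻ y in E, ENNReal.ofReal (|g x - g y| ^ p)) +
          ∫⁻ y in E, ENNReal.ofReal (|g y| ^ p)) := by
          rw [← lintegral_const_mul' _ _ ENNReal.ofReal_ne_top]
          refine lintegral_congr fun x => ?_
          rw [lintegral_const_mul' _ _ ENNReal.ofReal_ne_top, lintegral_add_right]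
          exact cg.measurable.ennreal_ofReal
      _ = ENNReal.ofReal (2 ^ p) * ((∫⁻ x in B, ∫⁻ y in E, ENNReal.ofReal (|g x - g y| ^ p)) +
        (∫⁻ y in E, ENNReal.ofReal (|g y| ^ p)) * volume B) := by
          rw [lintegral_add_right _ measurable_const, setLIntegral_const]
      _ ≤ _ := by
          gcongr
  rw [c1 B hBc, c1 E hEc] at key
  have key2 := key.trans (mul_le_mul_right (add_le_add_left (hC g hg) _) _)
  rw [c2, ← ENNReal.ofReal_toReal hBfin, ← ENNReal.ofReal_toReal hEfin,
    ← ENNReal.ofReal_mul (integral_nonneg fun _ => by positivity), ← ENNReal.ofReal_mul hC0,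
    ← ENNReal.ofReal_mul n1, ← ENNReal.ofReal_add (by positivity) (by positivity),
    ← ENNReal.ofReal_mul (by positivity),
    ENNReal.ofReal_le_ofReal_iff (by positivity)] at key2
  have hb0 : 0 ≤ b := ENNReal.toReal_nonneg
  rw [div_mul_eq_mul_div, le_div_iff₀ hEpos]
  refine key2.trans ?_
  rw [mul_assoc]
  gcongr
  nlinarith [mul_nonneg hC0 n1, mul_nonneg hb0 n2]

lemma poincare_c {p : ℝ} (hp : 1 < p) (x0 : Euc d) {r : ℝ} (hr : 0 < r) :
    ∃ C : ℝ, 0 ≤ C ∧ ∀ g : Euc d → ℝ, ContDiff ℝ 1 g → ∃ y ∈ Metric.closedBall x0 r,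
      ∫ x in Metric.closedBall x0 r, |g x - g y| ^ p ≤
        C * ∫ x in Metric.closedBall x0 r, ‖gradient g x‖ ^ p := by
  have hp0 : 0 < p := by linarith
  obtain ⟨C, hC0, hC⟩ := poincare_lintegral hp x0 hr
  set B := Metric.closedBall x0 r with hB
  have hBm : MeasurableSet B := Metric.isClosed_closedBall.measurableSet
  have hBc : IsCompact B := isCompact_closedBall x0 r
  have hBfin : volume B ≠ ⊤ := hBc.measure_lt_top.ne
  have hBpos0 : volume B ≠ 0 := (Metric.measure_closedBall_pos volume x0 hr).ne'
  have hBpos : 0 < (volume B).toReal := ENNReal.toReal_pos hBpos0 hBfin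
  refine ⟨C / (volume B).toReal, by positivity, fun g hg => ?_⟩
  have hm : Measurable (fun q : Euc d × Euc d => ENNReal.ofReal (|g q.1 - g q.2| ^ p)) := by
    have := cont_rpow hp ((hg.continuous.comp continuous_fst).sub
      (hg.continuous.comp (continuous_snd (X := Euc d))))
    exact this.measurable.ennreal_ofReal
  obtain ⟨y, hy, hle⟩ := exists_le_setLAverage (μ := volume) (s := B)
    (f := fun x => ∫⁻ y in B, ENNReal.ofReal (|g x - g y| ^ p)) hBpos0 hBfin
    (hm.lintegral_prod_right' (ν := volume.restrict B)).aemeasurable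
  refine ⟨y, hy, ?_⟩
  rw [setLAverage_eq] at hle
  have h2 := hle.trans (ENNReal.div_le_div_right (hC g hg) _)
  have cgr : Continuous (fun x => ‖gradient g x‖ ^ p) :=
    (grad_continuous hg).norm.rpow_const fun _ => Or.inr hp0.le
  have cgy : Continuous (fun x => |g y - g x| ^ p) :=
    cont_rpow hp (continuous_const.sub hg.continuous)
  have n2 : 0 ≤ ∫ x in B, ‖gradient g x‖ ^ p := integral_nonneg fun _ => by positivity
  rw [← ofReal_integral_eq_lintegral_ofReal (cgr.continuousOn.integrableOn_compact hBc)
      (Eventually.of_forall fun _ => by positivity), ← ofReal_integral_eq_lintegral_ofReal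
      (cgy.continuousOn.integrableOn_compact hBc) (Eventually.of_forall fun _ => by positivity),
      ← ENNReal.ofReal_mul hC0, ← ENNReal.ofReal_toReal hBfin, ← ENNReal.ofReal_div_of_pos hBpos,
      ENNReal.ofReal_le_ofReal_iff (by positivity)] at h2
  simp_rw [abs_sub_comm (g _) (g y)]
  refine h2.trans_eq ?_
  ring
end poincare

end S7

section S8

variable {d : ℕ} {Ω : Set (Euc d)}

lemma int_shift_le {p : ℝ} (hp : 1 < p) {K : Set (Euc d)} (hK : IsCompact K) {h : Euc d → ℝ}
    (hh : Continuous h) {c M : ℝ} (hc0 : 0 ≤ c) (hcM : c ≤ M) :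
    ∫ x in K, |h x| ^ p ≤ 2 ^ p * ((∫ x in K, |h x - c| ^ p) + M ^ p * volume.real K) := by
  have hp0 : 0 < p := by linarith
  have i1 : IntegrableOn (fun x => |h x| ^ p) K := (cont_rpow hp hh).continuousOn.integrableOn_compact hK
  have i2 : IntegrableOn (fun x => |h x - c| ^ p) K :=
    (cont_rpow hp (hh.sub continuous_const)).continuousOn.integrableOn_compact hK
  have i3 : IntegrableOn (fun _ : Euc d => M ^ p) K := continuous_const.continuousOn.integrableOn_compact hK
  have : ∫ x in K, |h x| ^ p ≤ ∫ x in K, 2 ^ p * (|h x - c| ^ p + M ^ p) := by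
    refine integral_mono i1 ((i2.add i3).const_mul _) fun x => ?_
    have h1 := add_rpow_le hp (h x - c) c
    simp only [sub_add_cancel, Real.norm_eq_abs] at h1
    refine h1.trans ?_
    have : |c| ^ p ≤ M ^ p := by
      rw [abs_of_nonneg hc0]; exact Real.rpow_le_rpow hc0 hcM hp0.le
    show 2 ^ p * _ ≤ 2 ^ p * _
    gcongr
  refine this.trans (le_of_eq ?_)
  rw [integral_const_mul, integral_add i2 i3]
  simp [mul_comm]

lemma chain_step (hΩ : IsOpen Ω) {p : ℝ} (hp : 1 < p) {V : Euc d → ℝ}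
    (hV : LocBddPotential Ω V) {v : Euc d → ℝ} (hv : ContDiffOn ℝ 1 v Ω)
    (hvpos : ∀ x ∈ Ω, 0 < v x) (hsup : Super Ω V p v)
    {u : ℕ → Euc d → ℝ} (hu : ∀ k, C1c Ω (u k)) (hu0 : ∀ k x, 0 ≤ u k x)
    (hQu : Tendsto (fun k => energyQ Ω V p (u k)) atTop (𝓝 0))
    {c : ℕ → ℝ} {M : ℝ} (hc0 : ∀ k, 0 ≤ c k) (hcM : ∀ k, c k ≤ M)
    {x x1 : Euc d} {r r1 : ℝ} (hr : 0 < r) (hr1 : 0 < r1)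
    (hB : Metric.closedBall x r ⊆ Ω) (hE : Metric.closedBall x1 r1 ⊆ Metric.closedBall x r)
    (hlim : Tendsto (fun k => ∫ y in Metric.closedBall x1 r1, |u k y * (v y)⁻¹ - c k| ^ p) atTop (𝓝 0)) :
    Tendsto (fun k => ∫ y in Metric.closedBall x r, |u k y * (v y)⁻¹ - c k| ^ p) atTop (𝓝 0) := by
  have hp0 : 0 < p := by linarith
  have hM0 : 0 ≤ M := (hc0 0).trans (hcM 0)
  obtain ⟨D, hD0, hD⟩ := poincare_E hp x hr hr1 hE
  set B := Metric.closedBall x r with hBdef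
  have hBc : IsCompact B := isCompact_closedBall x r
  set m := M ^ p * volume.real B with hm
  have hm0 : 0 ≤ m := by positivity
  have h2p : (0:ℝ) < 2 ^ p := by positivity
  have hq : ∀ k, C1c Ω (fun y => u k y * (v y)⁻¹) := fun k => (hu k).quot hΩ hv hvpos
  set a : ℕ → ℝ := fun k => ∫ y in B, |u k y * (v y)⁻¹ - c k| ^ p with ha
  set e : ℕ → ℝ := fun k => ∫ y in Metric.closedBall x1 r1, |u k y * (v y)⁻¹ - c k| ^ p with he
  have ha0 : ∀ k, 0 ≤ a k := fun k => by simp only [ha]; positivity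
  rw [Metric.tendsto_atTop]
  intro ε hε
  set s := min (1/2) (ε / (4 * (m + 1))) with hs
  have hs0 : 0 < s := by rw [hs]; positivity
  have hs1 : s ≤ 1/2 := min_le_left _ _
  have hs2 : s * (4 * (m + 1)) ≤ ε := by
    have := min_le_right (1/2) (ε / (4 * (m + 1)))
    rwa [← hs, le_div_iff₀ (by positivity)] at this
  set δ := s / ((D + 1) * 2 ^ p) with hδ
  have hδ0 : 0 < δ := by positivity
  have hDδ : D * δ * 2 ^ p ≤ s := by
    have : (D + 1) * δ * 2 ^ p = s := by rw [hδ]; field_simp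
    have : 0 ≤ δ * 2 ^ p := by positivity
    nlinarith
  obtain ⟨C, hC0, hC⟩ := grad_quot_bound hΩ hp hV hv hvpos hsup hBc hB hδ0
  have key : ∀ k, a k ≤ 2 * D * (e k + C * energyQ Ω V p (u k)) + 2 * s * m := by
    intro k
    have h1 := hD (fun y => u k y * (v y)⁻¹ - c k) ((hq k).1.sub contDiff_const)
    have h2 : ∀ y, gradient (fun y => u k y * (v y)⁻¹ - c k) y = gradient (fun y => u k y * (v y)⁻¹) y := by
      intro y
      simp only [gradient, fderiv_sub_const]
    simp only [h2] at h1
    have h3 := hC (u k) (hu k) (hu0 k)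
    have h4 := int_shift_le hp hBc (hq k).1.continuous (hc0 k) (hcM k)
    change a k ≤ D * (e k + _) at h1
    change _ ≤ 2 ^ p * (a k + m) at h4
    have h5 : a k ≤ D * (e k + (C * energyQ Ω V p (u k) + δ * (2 ^ p * (a k + m)))) := by
      refine h1.trans ?_
      gcongr
      refine h3.trans ?_
      gcongr
    have h6 : D * (δ * (2 ^ p * (a k + m))) ≤ s * (a k + m) := by
      have : 0 ≤ a k + m := add_nonneg (ha0 k) hm0
      calc _ = (D * δ * 2 ^ p) * (a k + m) := by ring
        _ ≤ _ := by gcongr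
    have h7 := mul_le_mul_of_nonneg_right hs1 (ha0 k)
    nlinarith
  have hl : Tendsto (fun k => 2 * D * (e k + C * energyQ Ω V p (u k))) atTop (𝓝 0) := by
    have := (hlim.add (hQu.const_mul C)).const_mul (2 * D)
    simpa using this
  obtain ⟨N, hN⟩ := (hl.eventually (gt_mem_nhds (half_pos hε))).exists_forall_of_atTop
  refine ⟨N, fun k hk => ?_⟩
  rw [Real.dist_eq, sub_zero, abs_of_nonneg (ha0 k)]
  have := hN k hk
  have := key k
  nlinarith

lemma chain (hΩ : IsOpen Ω) (hΩc : IsConnected Ω) {p : ℝ} (hp : 1 < p) {V : Euc d → ℝ}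
    (hV : LocBddPotential Ω V) {v : Euc d → ℝ} (hv : ContDiffOn ℝ 1 v Ω)
    (hvpos : ∀ x ∈ Ω, 0 < v x) (hsup : Super Ω V p v)
    {u : ℕ → Euc d → ℝ} (hu : ∀ k, C1c Ω (u k)) (hu0 : ∀ k x, 0 ≤ u k x)
    (hQu : Tendsto (fun k => energyQ Ω V p (u k)) atTop (𝓝 0))
    {c : ℕ → ℝ} {M : ℝ} (hc0 : ∀ k, 0 ≤ c k) (hcM : ∀ k, c k ≤ M)
    {x0 : Euc d} {r0 : ℝ} (hr0 : 0 < r0) (hB0 : Metric.closedBall x0 r0 ⊆ Ω)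
    (hlim : Tendsto (fun k => ∫ y in Metric.closedBall x0 r0, |u k y * (v y)⁻¹ - c k| ^ p) atTop (𝓝 0))
    {K : Set (Euc d)} (hK : IsCompact K) (hKΩ : K ⊆ Ω) :
    Tendsto (fun k => ∫ y in K, |u k y * (v y)⁻¹ - c k| ^ p) atTop (𝓝 0) := by
  have hq : ∀ k, C1c Ω (fun y => u k y * (v y)⁻¹) := fun k => (hu k).quot hΩ hv hvpos
  have hcont : ∀ k, Continuous (fun y => |u k y * (v y)⁻¹ - c k| ^ p) := fun k =>
    cont_rpow hp ((hq k).1.continuous.sub continuous_const)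
  have hnn : ∀ k y, 0 ≤ |u k y * (v y)⁻¹ - c k| ^ p := fun k y => by positivity
  have hmono : ∀ {A B : Set (Euc d)}, IsCompact B → A ⊆ B →
      Tendsto (fun k => ∫ y in B, |u k y * (v y)⁻¹ - c k| ^ p) atTop (𝓝 0) →
      Tendsto (fun k => ∫ y in A, |u k y * (v y)⁻¹ - c k| ^ p) atTop (𝓝 0) := by
    intro A B hB hAB h
    refine squeeze_zero (fun k => integral_nonneg (hnn k)) (fun k => ?_) h
    exact setIntegral_mono_set ((hcont k).continuousOn.integrableOn_compact hB)
      (Eventually.of_forall (hnn k)) hAB.eventuallyLE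
  -- good set
  set G : Set (Euc d) := {x | ∃ r > 0, Metric.closedBall x r ⊆ Ω ∧
    Tendsto (fun k => ∫ y in Metric.closedBall x r, |u k y * (v y)⁻¹ - c k| ^ p) atTop (𝓝 0)} with hG
  have sub : ∀ {x y : Euc d} {r : ℝ}, dist y x ≤ r / 2 →
      Metric.closedBall y (r/2) ⊆ Metric.closedBall x r := by
    intro x y r h
    refine Metric.closedBall_subset_closedBall' ?_
    linarith
  have hGo : IsOpen G := by
    rw [Metric.isOpen_iff]
    rintro x ⟨r, hr, hrΩ, hl⟩
    refine ⟨r / 2, by positivity, fun y hy => ?_⟩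
    have hs := sub (r := r) (le_of_lt (Metric.mem_ball.1 hy))
    exact ⟨r / 2, by positivity, hs.trans hrΩ, hmono (isCompact_closedBall _ _) hs hl⟩
  have hGcl : closure G ∩ Ω ⊆ G := by
    rintro x ⟨hxG, hxΩ⟩
    obtain ⟨r, hr, hrΩ⟩ := Metric.nhds_basis_closedBall.mem_iff.1 (hΩ.mem_nhds hxΩ)
    obtain ⟨y, ⟨s, hs, hsΩ, hl⟩, hy⟩ := Metric.mem_closure_iff.1 hxG (r / 2) (by positivity)
    have hy' : Metric.closedBall y (min s (r/2)) ⊆ Metric.closedBall x r :=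
      (Metric.closedBall_subset_closedBall (min_le_right _ _)).trans
        (sub (by rw [dist_comm]; exact hy.le))
    refine ⟨r, hr, hrΩ, chain_step hΩ hp hV hv hvpos hsup hu hu0 hQu hc0 hcM hr
      (lt_min hs (by positivity)) hrΩ hy' (hmono (isCompact_closedBall _ _)
        (Metric.closedBall_subset_closedBall (min_le_left _ _)) hl)⟩
  have hx0 : x0 ∈ G := ⟨r0, hr0, hB0, hlim⟩
  have hΩG : Ω ⊆ G := by
    refine hΩc.isPreconnected.subset_of_closure_inter_subset hGo ?_ hGcl
    exact ⟨x0, hB0 (Metric.mem_closedBall_self hr0.le), hx0⟩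
  refine hK.induction_on (p := fun A => Tendsto (fun k => ∫ y in A ∩ K, |u k y * (v y)⁻¹ - c k| ^ p) atTop (𝓝 0))
    ?_ ?_ ?_ ?_ |> (by simpa using ·)
  · simp
  · intro s t hst h
    refine squeeze_zero (fun k => integral_nonneg (hnn k)) (fun k => ?_) h
    exact setIntegral_mono_set (((hcont k).continuousOn.integrableOn_compact hK).mono_set Set.inter_subset_right)
      (Eventually.of_forall (hnn k)) (Set.inter_subset_inter_left _ hst).eventuallyLE
  · intro s t hs ht
    refine squeeze_zero (fun k => integral_nonneg (hnn k)) (fun k => ?_) (by simpa using hs.add ht)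
    rw [Set.union_inter_distrib_right]
    have i := (hcont k).continuousOn.integrableOn_compact (μ := volume) hK
    have i1 := i.mono_set (Set.inter_subset_right : s ∩ K ⊆ K)
    have i2 := i.mono_set (Set.inter_subset_right : t ∩ K ⊆ K)
    rw [← integral_add_measure i1 i2]
    exact integral_mono_measure (Measure.restrict_union_le _ _) (Eventually.of_forall (hnn k))
      (Integrable.add_measure i1 i2)
  · intro x hx
    obtain ⟨r, hr, hrΩ, hl⟩ := hΩG (hKΩ hx)
    exact ⟨Metric.closedBall x r, mem_nhdsWithin_of_mem_nhds (Metric.closedBall_mem_nhds x hr),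
      hmono (isCompact_closedBall _ _) Set.inter_subset_left hl⟩

end S8

section S9

variable {d : ℕ} {Ω : Set (Euc d)}

lemma key_conv (hΩ : IsOpen Ω) (hΩc : IsConnected Ω) {p : ℝ} (hp : 1 < p) {V : Euc d → ℝ}
    (hV : LocBddPotential Ω V) {v : Euc d → ℝ} (hv : ContDiffOn ℝ 1 v Ω)
    (hvpos : ∀ x ∈ Ω, 0 < v x) (hsup : Super Ω V p v)
    {u : ℕ → Euc d → ℝ} (hu : ∀ k, C1c Ω (u k)) (hu0 : ∀ k x, 0 ≤ u k x)
    (hQu : Tendsto (fun k => energyQ Ω V p (u k)) atTop (𝓝 0))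
    {x0 : Euc d} {r0 : ℝ} (hr0 : 0 < r0)
    {K : Set (Euc d)} (hK : IsCompact K) (hKΩ : K ⊆ Ω) (hBK : Metric.closedBall x0 r0 ⊆ K)
    (hK1 : ∀ k, ∫ x in K, |u k x| ^ p = 1) :
    ∃ c : ℝ, 0 ≤ c ∧ ∃ φ : ℕ → ℕ, StrictMono φ ∧ ∀ L : Set (Euc d), IsCompact L → L ⊆ Ω →
      Tendsto (fun k => ∫ x in L, |u (φ k) x - c * v x| ^ p) atTop (𝓝 0) := by
  have hp0 : 0 < p := by linarith
  have hpn : p ≠ 0 := hp0.ne'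
  have h2p : (0:ℝ) < 2 ^ p := by positivity
  set B := Metric.closedBall x0 r0 with hBdef
  have hBc : IsCompact B := isCompact_closedBall x0 r0
  have hBΩ : B ⊆ Ω := hBK.trans hKΩ
  have hq : ∀ k, C1c Ω (fun y => u k y * (v y)⁻¹) := fun k => (hu k).quot hΩ hv hvpos
  have hvinv : ContinuousOn (fun y => (v y)⁻¹) Ω :=
    hv.continuousOn.inv₀ fun x hx => (hvpos x hx).ne'
  obtain ⟨m1, hm1⟩ := hK.exists_bound_of_continuousOn (hvinv.mono hKΩ)
  set m := |m1| ^ p with hm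
  have hm0 : 0 ≤ m := by positivity
  have hBh : ∀ k, ∫ x in B, |u k x * (v x)⁻¹| ^ p ≤ m := by
    intro k
    have i1 : IntegrableOn (fun x => |u k x * (v x)⁻¹| ^ p) K :=
      (cont_rpow hp (hq k).1.continuous).continuousOn.integrableOn_compact hK
    have i2 : IntegrableOn (fun x => |u k x| ^ p) K :=
      (cont_rpow hp (hu k).1.continuous).continuousOn.integrableOn_compact hK
    calc _ ≤ ∫ x in K, |u k x * (v x)⁻¹| ^ p :=
          setIntegral_mono_set i1 (Eventually.of_forall fun x => by positivity) hBK.eventuallyLE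
      _ ≤ ∫ x in K, m * |u k x| ^ p := by
          refine setIntegral_mono_on i1 (i2.const_mul m) hK.measurableSet fun x hx => ?_
          rw [abs_mul, Real.mul_rpow (abs_nonneg _) (abs_nonneg _), mul_comm]
          have : |(v x)⁻¹| ^ p ≤ m := by
            refine Real.rpow_le_rpow (abs_nonneg _) ?_ hp0.le
            exact (hm1 x hx).trans (le_abs_self _)
          gcongr
      _ = m := by rw [integral_const_mul, hK1]; ring
  have hgrad : Tendsto (fun k => ∫ x in B, ‖gradient (fun y => u k y * (v y)⁻¹) x‖ ^ p) atTop (𝓝 0) := by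
    rw [Metric.tendsto_atTop]
    intro ε hε
    set δ := ε / (2 * (m + 1)) with hδ
    have hδ0 : 0 < δ := by positivity
    have hδm : δ * m ≤ ε / 2 := by
      have : δ * (m + 1) = ε / 2 := by rw [hδ]; field_simp
      nlinarith
    obtain ⟨C, hC0, hC⟩ := grad_quot_bound hΩ hp hV hv hvpos hsup hBc hBΩ hδ0
    have hl : Tendsto (fun k => C * energyQ Ω V p (u k)) atTop (𝓝 0) := by
      simpa using hQu.const_mul C
    obtain ⟨N, hN⟩ := (hl.eventually (gt_mem_nhds (half_pos hε))).exists_forall_of_atTop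
    refine ⟨N, fun k hk => ?_⟩
    rw [Real.dist_eq, sub_zero, abs_of_nonneg (by positivity)]
    have h1 := hN k hk
    have h2 := hC (u k) (hu k) (hu0 k)
    have h3 := mul_le_mul_of_nonneg_left (hBh k) hδ0.le
    linarith
  obtain ⟨D, hD0, hD⟩ := poincare_c hp x0 hr0
  choose y hyB hy using fun k => hD _ (hq k).1
  set c : ℕ → ℝ := fun k => u k (y k) * (v (y k))⁻¹ with hc
  have hc0 : ∀ k, 0 ≤ c k := fun k =>
    mul_nonneg (hu0 k _) (inv_nonneg.2 (hvpos _ (hBΩ (hyB k))).le)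
  have hlim : Tendsto (fun k => ∫ x in B, |u k x * (v x)⁻¹ - c k| ^ p) atTop (𝓝 0) :=
    squeeze_zero (fun k => by positivity) hy (by simpa using hgrad.const_mul D)
  obtain ⟨S, hS⟩ := hlim.bddAbove_range
  have hvB : 0 < volume.real B := by
    rw [Measure.real, ENNReal.toReal_pos_iff]
    exact ⟨Metric.measure_closedBall_pos _ _ hr0, hBc.measure_lt_top⟩
  set M := 1 + (2 ^ p * (S + m)) / volume.real B with hM
  have hcM : ∀ k, c k ≤ M := by
    intro k
    have h1 : c k ^ p * volume.real B ≤ 2 ^ p * (S + m) := by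
      have i1 : IntegrableOn (fun x => |u k x * (v x)⁻¹| ^ p) B :=
        (cont_rpow hp (hq k).1.continuous).continuousOn.integrableOn_compact hBc
      have i2 : IntegrableOn (fun x => |u k x * (v x)⁻¹ - c k| ^ p) B :=
        (cont_rpow hp ((hq k).1.continuous.sub continuous_const)).continuousOn.integrableOn_compact hBc
      have i3 : IntegrableOn (fun _ : Euc d => c k ^ p) B :=
        continuous_const.continuousOn.integrableOn_compact hBc
      have h2 : ∫ x in B, c k ^ p ≤ ∫ x in B, 2 ^ p * (|u k x * (v x)⁻¹ - c k| ^ p + |u k x * (v x)⁻¹| ^ p) := by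
        refine integral_mono i3 ((i2.add i1).const_mul _) fun x => ?_
        have := add_rpow_le hp (c k - u k x * (v x)⁻¹) (u k x * (v x)⁻¹)
        simp only [sub_add_cancel, Real.norm_eq_abs] at this
        rw [abs_of_nonneg (hc0 k), abs_sub_comm] at this
        exact this
      rw [integral_const_mul, integral_add i2 i1] at h2
      have h3 : ∫ x in B, c k ^ p = c k ^ p * volume.real B := by simp [mul_comm]
      rw [h3] at h2
      refine h2.trans ?_
      have := hS ⟨k, rfl⟩
      have := hBh k
      gcongr
    have h2 : c k ^ p ≤ (2 ^ p * (S + m)) / volume.real B := by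
      rwa [le_div_iff₀ hvB]
    have h3 : c k ≤ 1 + c k ^ p := by
      rcases le_total (c k) 1 with h | h
      · have : 0 ≤ c k ^ p := Real.rpow_nonneg (hc0 k) _
        linarith
      · have := Real.rpow_le_rpow_of_exponent_le h hp.le
        rw [Real.rpow_one] at this; linarith
    linarith
  have hch : ∀ L : Set (Euc d), IsCompact L → L ⊆ Ω →
      Tendsto (fun k => ∫ x in L, |u k x * (v x)⁻¹ - c k| ^ p) atTop (𝓝 0) := fun L hL hLΩ =>
    chain hΩ hΩc hp hV hv hvpos hsup hu hu0 hQu hc0 hcM hr0 hBΩ hlim hL hLΩ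
  obtain ⟨c', hc', φ, hφ, hcφ⟩ := tendsto_subseq_of_bounded (Metric.isBounded_Icc 0 M)
    (fun k => ⟨hc0 k, hcM k⟩ : ∀ k, c k ∈ Set.Icc 0 M)
  have hc'0 : 0 ≤ c' := ge_of_tendsto' hcφ fun k => hc0 _
  refine ⟨c', hc'0, φ, hφ, fun L hL hLΩ => ?_⟩
  obtain ⟨N1, hN1⟩ := hL.exists_bound_of_continuousOn (hv.continuousOn.mono hLΩ)
  set N := |N1| ^ p with hN
  have hN0 : 0 ≤ N := by positivity
  have hle : ∀ k, ∫ x in L, |u (φ k) x - c' * v x| ^ p ≤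
      N * 2 ^ p * ((∫ x in L, |u (φ k) x * (v x)⁻¹ - c (φ k)| ^ p) + |c (φ k) - c'| ^ p * volume.real L) := by
    intro k
    have i1 : IntegrableOn (fun x => |u (φ k) x - c' * v x| ^ p) L := by
      have : ContinuousOn (fun x => u (φ k) x - c' * v x) L :=
        (hu _).1.continuous.continuousOn.sub ((hv.continuousOn.mono hLΩ).const_smul c')
      exact (this.abs.rpow_const fun _ _ => Or.inr hp0.le).integrableOn_compact hL
    have i2 : IntegrableOn (fun x => |u (φ k) x * (v x)⁻¹ - c (φ k)| ^ p) L :=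
      (cont_rpow hp ((hq (φ k)).1.continuous.sub continuous_const)).continuousOn.integrableOn_compact hL
    have i3 : IntegrableOn (fun _ : Euc d => |c (φ k) - c'| ^ p) L :=
      continuous_const.continuousOn.integrableOn_compact hL
    have h2 : ∫ x in L, |u (φ k) x - c' * v x| ^ p ≤
        ∫ x in L, N * 2 ^ p * (|u (φ k) x * (v x)⁻¹ - c (φ k)| ^ p + |c (φ k) - c'| ^ p) := by
      refine setIntegral_mono_on i1 ((i2.add i3).const_mul _) hL.measurableSet fun x hx => ?_
      have hvx := hvpos x (hLΩ hx)
      have e1 : u (φ k) x - c' * v x = v x * ((u (φ k) x * (v x)⁻¹ - c (φ k)) + (c (φ k) - c')) := by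
        field_simp; ring
      rw [e1, abs_mul, Real.mul_rpow (abs_nonneg _) (abs_nonneg _), mul_assoc]
      have h3 := add_rpow_le hp (u (φ k) x * (v x)⁻¹ - c (φ k)) (c (φ k) - c')
      simp only [Real.norm_eq_abs] at h3
      have h4 : |v x| ^ p ≤ N :=
        Real.rpow_le_rpow (abs_nonneg _) ((hN1 x hx).trans (le_abs_self _)) hp0.le
      gcongr
    refine h2.trans (le_of_eq ?_)
    rw [integral_const_mul, integral_add i2 i3]
    simp [mul_comm]
  refine squeeze_zero (fun k => by positivity) hle ?_
  have t1 := (hch L hL hLΩ).comp hφ.tendsto_atTop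
  have t2 : Tendsto (fun k => |c (φ k) - c'| ^ p) atTop (𝓝 0) := by
    have : Tendsto (fun k => |c (φ k) - c'|) atTop (𝓝 0) := by
      have := (hcφ.sub_const c').abs
      simpa using this
    have := this.rpow_const (p := p) (Or.inr hp0.le)
    simpa [Real.zero_rpow hpn] using this
  have := (t1.add (t2.mul_const (volume.real L))).const_mul (N * 2 ^ p)
  simpa using this

end S9

section S10

variable {d : ℕ} {Ω : Set (Euc d)}

lemma C1c.const_mul {f : Euc d → ℝ} (hf : C1c Ω f) (c : ℝ) : C1c Ω (fun x => c * f x) := by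
  refine ⟨contDiff_const.mul hf.1, hf.2.1.mul_left, ?_⟩
  refine Set.Subset.trans ?_ hf.2.2
  exact closure_mono fun x hx => by
    simp only [Function.mem_support] at *
    exact right_ne_zero_of_mul hx

lemma C1c.energy_smul {f : Euc d → ℝ} (hf : C1c Ω f) {p : ℝ} (V : Euc d → ℝ) {c : ℝ} (hc : 0 ≤ c) :
    energyQ Ω V p (fun x => c * f x) = c ^ p * energyQ Ω V p f := by
  simp only [energyQ]
  rw [← integral_const_mul]
  congr 1
  ext x
  rw [grad_const_mul c ((hf.1.differentiable one_ne_zero) x), norm_smul, abs_mul, Real.norm_eq_abs,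
    abs_of_nonneg hc, Real.mul_rpow hc (norm_nonneg _), Real.mul_rpow hc (abs_nonneg _)]
  ring

lemma int_pos_of_pos {K : Set (Euc d)} (hK : IsCompact K) {x0 : Euc d} {r0 : ℝ} (hr0 : 0 < r0)
    (hBK : Metric.closedBall x0 r0 ⊆ K) {f : Euc d → ℝ} (hf : ContinuousOn f K)
    (hpos : ∀ x ∈ K, 0 < f x) : 0 < ∫ x in K, f x := by
  rw [setIntegral_pos_iff_support_of_nonneg_ae]
  · refine (Metric.measure_closedBall_pos volume x0 hr0).trans_le (measure_mono fun x hx => ?_)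
    exact ⟨(hpos x (hBK hx)).ne', hBK hx⟩
  · filter_upwards [ae_restrict_mem hK.measurableSet] with x hx
    exact (hpos x hx).le
  · exact hf.integrableOn_compact hK

lemma dicho (hΩ : IsOpen Ω) (hΩc : IsConnected Ω) {p : ℝ} (hp : 1 < p) {V : Euc d → ℝ}
    (hV : LocBddPotential Ω V) (hQ : ∀ f, C1c Ω f → 0 ≤ energyQ Ω V p f)
    {v : Euc d → ℝ} (hv : ContDiffOn ℝ 1 v Ω)
    (hvpos : ∀ x ∈ Ω, 0 < v x) (hsup : Super Ω V p v)
    {V₀ : Euc d → ℝ} (hV₀m : Measurable V₀) {C : ℝ} (hC : ∀ x, |V₀ x| ≤ C)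
    {S : Set (Euc d)} (hS : IsCompact S) (hSΩ : S ⊆ Ω)
    (hI : 0 < ∫ x in S, V₀ x * |v x| ^ p)
    {x0 : Euc d} {r0 : ℝ} (hr0 : 0 < r0)
    {K : Set (Euc d)} (hK : IsCompact K) (hKΩ : K ⊆ Ω) (hBK : Metric.closedBall x0 r0 ⊆ K) :
    ∃ a > 0, ∃ η > 0, ∀ u : Euc d → ℝ, C1c Ω u → (∀ x, 0 ≤ u x) →
      a * ∫ x in K, |u x| ^ p ≤ ∫ x in S, V₀ x * |u x| ^ p ∨
      η * ∫ x in K, |u x| ^ p ≤ energyQ Ω V p u := by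
  have hp0 : 0 < p := by linarith
  have hpn : p ≠ 0 := hp0.ne'
  have cont_v : ContinuousOn (fun x => |v x| ^ p) Ω :=
    hv.continuousOn.abs.rpow_const fun _ _ => Or.inr hp0.le
  set J := ∫ x in K, |v x| ^ p with hJ
  set I := ∫ x in S, V₀ x * |v x| ^ p with hIdef
  have hJ0 : 0 < J := int_pos_of_pos hK hr0 hBK (cont_v.mono hKΩ) fun x hx => by
    have := hvpos x (hKΩ hx); positivity
  refine ⟨I / (2 * J), by positivity, ?_⟩
  by_contra hcon
  push Not at hcon
  choose u hu hu0 hu1 hu2 using fun n : ℕ => hcon (1 / ((n : ℝ) + 1)) (by positivity)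
  set s : ℕ → ℝ := fun n => ∫ x in K, |u n x| ^ p with hs
  have hs0 : ∀ n, 0 < s n := by
    intro n
    have h1 := hQ _ (hu n)
    have h2 := hu2 n
    have h3 : 0 < 1 / ((n : ℝ) + 1) * s n := h1.trans_lt h2
    exact pos_of_mul_pos_right h3 (by positivity)
  set l : ℕ → ℝ := fun n => (s n) ^ (-(1 / p)) with hl
  have hl0 : ∀ n, 0 ≤ l n := fun n => Real.rpow_nonneg (hs0 n).le _
  have hlp : ∀ n, (l n) ^ p = (s n)⁻¹ := by
    intro n
    rw [hl, ← Real.rpow_mul (hs0 n).le, ← Real.rpow_neg_one]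
    congr 1; field_simp
  have hls : ∀ n, (l n) ^ p * s n = 1 := fun n => by rw [hlp, inv_mul_cancel₀ (hs0 n).ne']
  have hlp0 : ∀ n, 0 < (l n) ^ p := fun n => by rw [hlp]; exact inv_pos.2 (hs0 n)
  have hpow : ∀ n x, |l n * u n x| ^ p = (l n) ^ p * |u n x| ^ p := fun n x => by
    rw [abs_mul, abs_of_nonneg (hl0 n), Real.mul_rpow (hl0 n) (abs_nonneg _)]
  have hw : ∀ n, C1c Ω (fun x => l n * u n x) := fun n => (hu n).const_mul _
  have hK1 : ∀ n, ∫ x in K, |l n * u n x| ^ p = 1 := fun n => by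
    simp only [hpow]; rw [integral_const_mul]; exact hls n
  have hwQ : Tendsto (fun n => energyQ Ω V p (fun x => l n * u n x)) atTop (𝓝 0) := by
    refine squeeze_zero (fun n => hQ _ (hw n)) (fun n => ?_) tendsto_one_div_add_atTop_nhds_zero_nat
    rw [(hu n).energy_smul V (hl0 n)]
    calc _ ≤ (l n) ^ p * (1 / ((n : ℝ) + 1) * s n) := mul_le_mul_of_nonneg_left (hu2 n).le (hlp0 n).le
      _ = 1 / ((n : ℝ) + 1) * ((l n) ^ p * s n) := by ring
      _ = _ := by rw [hls]; ring
  have hwV : ∀ n, ∫ x in S, V₀ x * |l n * u n x| ^ p ≤ I / (2 * J) := by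
    intro n
    have e : ∀ x, V₀ x * |l n * u n x| ^ p = (l n) ^ p * (V₀ x * |u n x| ^ p) := fun x => by
      rw [hpow]; ring
    simp only [e]
    rw [integral_const_mul]
    calc _ ≤ (l n) ^ p * (I / (2 * J) * s n) := mul_le_mul_of_nonneg_left (hu1 n).le (hlp0 n).le
      _ = I / (2 * J) * ((l n) ^ p * s n) := by ring
      _ = _ := by rw [hls]; ring
  obtain ⟨c, hc0, φ, hφ, hconv⟩ := key_conv hΩ hΩc hp hV hv hvpos hsup hw
    (fun k x => mul_nonneg (hl0 k) (hu0 k x)) hwQ hr0 hK hKΩ hBK hK1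
  have hlp' : ∀ L : Set (Euc d), IsCompact L → L ⊆ Ω → ∀ m : Euc d → ℝ, Measurable m → ∀ D : ℝ,
      (∀ x, |m x| ≤ D) → Tendsto (fun k => ∫ x in L, m x * |l (φ k) * u (φ k) x| ^ p) atTop
        (𝓝 (∫ x in L, m x * |c * v x| ^ p)) := by
    intro L hL hLΩ m hm D hD
    have cv : ContinuousOn (fun x => c * v x) L := (hv.continuousOn.mono hLΩ).const_smul c
    refine lp_tendsto hp (fun k => ?_) ?_ (fun k => ?_) (hconv L hL hLΩ) hm.aestronglyMeasurable
      (Eventually.of_forall hD)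
    · exact (cont_rpow hp (hw (φ k)).1.continuous).continuousOn.integrableOn_compact hL
    · exact (cv.abs.rpow_const fun _ _ => Or.inr hp0.le).integrableOn_compact hL
    · exact (((hw (φ k)).1.continuous.continuousOn.sub cv).abs.rpow_const
        fun _ _ => Or.inr hp0.le).integrableOn_compact hL
  have hcv : ∀ x, |c * v x| ^ p = c ^ p * |v x| ^ p := fun x => by
    rw [abs_mul, abs_of_nonneg hc0, Real.mul_rpow hc0 (abs_nonneg _)]
  have h1 := hlp' K hK hKΩ (fun _ => 1) measurable_const 1 (by simp)
  simp only [one_mul, hK1, hcv] at h1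
  rw [integral_const_mul] at h1
  have h1 : (1:ℝ) = c ^ p * J := tendsto_nhds_unique tendsto_const_nhds h1
  have h2 := hlp' S hS hSΩ V₀ hV₀m C hC
  have h3 := le_of_tendsto' h2 fun k => hwV (φ k)
  have e : ∀ x, V₀ x * |c * v x| ^ p = c ^ p * (V₀ x * |v x| ^ p) := fun x => by
    rw [hcv]; ring
  simp only [e] at h3
  rw [integral_const_mul] at h3
  change c ^ p * I ≤ _ at h3
  rw [le_div_iff₀ (by positivity)] at h3
  have : c ^ p * I * (2 * J) = 2 * I := by
    calc _ = 2 * I * (c ^ p * J) := by ring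
      _ = _ := by rw [← h1]; ring
  linarith

lemma strict_pos (hΩ : IsOpen Ω) (hΩc : IsConnected Ω) {p : ℝ} (hp : 1 < p) {V : Euc d → ℝ}
    (hV : LocBddPotential Ω V) (hQ : ∀ f, C1c Ω f → 0 ≤ energyQ Ω V p f)
    {v : Euc d → ℝ} (hv : ContDiffOn ℝ 1 v Ω)
    (hvpos : ∀ x ∈ Ω, 0 < v x) (hsup : Super Ω V p v)
    {V₀ : Euc d → ℝ} (hV₀m : Measurable V₀) {C : ℝ} (hC : ∀ x, |V₀ x| ≤ C)
    {S : Set (Euc d)} (hS : IsCompact S) (hSΩ : S ⊆ Ω)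
    (hI : 0 < ∫ x in S, V₀ x * |v x| ^ p) :
    ∃ t > 0, ∀ K : Set (Euc d), IsCompact K → K ⊆ Ω → ∃ ε > 0, ∀ u : Euc d → ℝ, C1c Ω u →
      (∀ x, 0 ≤ u x) → ε * ∫ x in K, |u x| ^ p ≤ energyQ Ω V p u + t * ∫ x in S, V₀ x * |u x| ^ p := by
  obtain ⟨x0, hx0⟩ := hΩc.nonempty
  obtain ⟨r0, hr0, hB⟩ := Metric.nhds_basis_closedBall.mem_iff.1 (hΩ.mem_nhds hx0)
  have hC0 : 0 ≤ C := (abs_nonneg _).trans (hC x0)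
  have hmain := fun (K : Set (Euc d)) (hK : IsCompact K) (hKΩ : K ⊆ Ω) =>
    dicho hΩ hΩc hp hV hQ hv hvpos hsup hV₀m hC hS hSΩ hI hr0
      (K := K ∪ Metric.closedBall x0 r0) (hK.union (isCompact_closedBall _ _))
      (Set.union_subset hKΩ hB) Set.subset_union_right
  have hint : ∀ u : Euc d → ℝ, C1c Ω u → ∀ K : Set (Euc d),
      ∫ x in K, |u x| ^ p ≤ ∫ x in K ∪ Metric.closedBall x0 r0, |u x| ^ p := fun u hu K =>
    setIntegral_mono_set (hu.int_pow hp).integrableOn (Eventually.of_forall fun x => by positivity)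
      Set.subset_union_left.eventuallyLE
  obtain ⟨a1, ha1, η1, hη1, h1⟩ := hmain S hS hSΩ
  set t1 := η1 / (C + 1) with ht1
  have ht10 : 0 < t1 := by positivity
  have ht1C : t1 * C ≤ η1 := by
    have : t1 * (C + 1) = η1 := by rw [ht1]; field_simp
    nlinarith
  have hpos : ∀ u, C1c Ω u → (∀ x, 0 ≤ u x) →
      0 ≤ energyQ Ω V p u + t1 * ∫ x in S, V₀ x * |u x| ^ p := by
    intro u hu hu0
    have hS0 : 0 ≤ ∫ x in S, |u x| ^ p := by positivity
    have hU := hint u hu S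
    rcases h1 u hu hu0 with h | h
    · have := hQ u hu
      have : 0 ≤ ∫ x in S, V₀ x * |u x| ^ p := le_trans (by positivity) h
      positivity
    · have h2 : -(C * ∫ x in S, |u x| ^ p) ≤ ∫ x in S, V₀ x * |u x| ^ p := by
        rw [← integral_const_mul, ← integral_neg]
        refine integral_mono ((hu.int_pow hp).integrableOn.const_mul C).neg
          ((hu.int_pow hp).integrableOn.bdd_mul (c := C) hV₀m.aestronglyMeasurable
            (Eventually.of_forall hC)) fun x => ?_
        have := (abs_le.1 (hC x)).1
        have hh : 0 ≤ |u x| ^ p := by positivity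
        show -(C * |u x| ^ p) ≤ V₀ x * |u x| ^ p
        nlinarith
      have h3 := mul_le_mul_of_nonneg_left h2 ht10.le
      have h4 := mul_le_mul_of_nonneg_right ht1C hS0
      have h5 := mul_le_mul_of_nonneg_left hU hη1.le
      nlinarith
  refine ⟨t1 / 2, by positivity, fun K hK hKΩ => ?_⟩
  obtain ⟨a, ha, η, hη, h⟩ := hmain K hK hKΩ
  refine ⟨min (t1 / 2 * a) (η / 2), by positivity, fun u hu hu0 => ?_⟩
  have hK0 : 0 ≤ ∫ x in K, |u x| ^ p := by positivity
  have hU := hint u hu K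
  set A := ∫ x in K, |u x| ^ p
  set A' := ∫ x in K ∪ Metric.closedBall x0 r0, |u x| ^ p
  rcases h u hu hu0 with h | h
  · have h2 := mul_le_mul_of_nonneg_right (min_le_left (t1 / 2 * a) (η / 2)) hK0
    have h3 := hQ u hu
    have h4 := mul_le_mul_of_nonneg_left h (by positivity : 0 ≤ t1 / 2)
    have h5 := mul_le_mul_of_nonneg_left hU (by positivity : 0 ≤ t1 / 2 * a)
    nlinarith
  · have h2 := mul_le_mul_of_nonneg_right (min_le_right (t1 / 2 * a) (η / 2)) hK0
    have h3 := hpos u hu hu0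
    have h5 := mul_le_mul_of_nonneg_left hU (by positivity : 0 ≤ η / 2)
    nlinarith

end S10

section S11

variable {d : ℕ} {Ω : Set (Euc d)}

lemma smooth_abs {e : ℝ} (he : 0 < e) (s : ℝ) :
    HasDerivAt (fun s : ℝ => √(s ^ 2 + e ^ 2) - e) (s / √(s ^ 2 + e ^ 2)) s := by
  have h0 : s ^ 2 + e ^ 2 ≠ 0 := by positivity
  have h := (((hasDerivAt_pow 2 s).add_const (e ^ 2)).sqrt h0).sub_const e
  refine h.congr_deriv ?_
  have : √(s ^ 2 + e ^ 2) ≠ 0 := by positivity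
  simp
  field_simp

lemma C1c.approx_abs {u : Euc d → ℝ} (hu : C1c Ω u) {e : ℝ} (he : 0 < e) :
    C1c Ω (fun x => √(u x ^ 2 + e ^ 2) - e) ∧ (∀ x, 0 ≤ √(u x ^ 2 + e ^ 2) - e) ∧
    (∀ x, √(u x ^ 2 + e ^ 2) - e ≤ |u x|) ∧ (∀ x, |u x| - e ≤ √(u x ^ 2 + e ^ 2) - e) ∧
    ∀ x, ‖gradient (fun x => √(u x ^ 2 + e ^ 2) - e) x‖ ≤ ‖gradient u x‖ := by
  have h1 : ∀ x, |u x| ≤ √(u x ^ 2 + e ^ 2) := fun x => by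
    rw [← Real.sqrt_sq_eq_abs]; exact Real.sqrt_le_sqrt (by nlinarith [sq_nonneg e])
  refine ⟨⟨?_, ?_, ?_⟩, fun x => ?_, fun x => ?_, fun x => ?_, fun x => ?_⟩
  · refine ContDiff.sub (ContDiff.sqrt ((hu.1.pow 2).add contDiff_const) fun x => ?_) contDiff_const
    positivity
  · refine HasCompactSupport.intro hu.2.1 fun x hx => ?_
    rw [image_eq_zero_of_notMem_tsupport hx]; simp [Real.sqrt_sq he.le]
  · refine Set.Subset.trans (closure_mono fun x hx => ?_) hu.2.2
    simp only [Function.mem_support] at *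
    intro h; apply hx; rw [h]; simp [Real.sqrt_sq he.le]
  · rw [sub_nonneg]; exact Real.le_sqrt_of_sq_le (by nlinarith [sq_nonneg (u x)])
  · rw [sub_le_iff_le_add, Real.sqrt_le_left (by positivity)]
    nlinarith [sq_abs (u x), abs_nonneg (u x)]
  · linarith [h1 x]
  · rw [grad_comp (φ := fun s : ℝ => √(s ^ 2 + e ^ 2) - e) (smooth_abs he (u x))
      ((hu.1.differentiable one_ne_zero) x), norm_smul, Real.norm_eq_abs, abs_div,
      abs_of_nonneg (Real.sqrt_nonneg _)]
    refine mul_le_of_le_one_left (norm_nonneg _) (div_le_one_of_le₀ (h1 x) (Real.sqrt_nonneg _))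

lemma all_sign {p : ℝ} (hp : 1 < p) {V : Euc d → ℝ} (hV : LocBddPotential Ω V)
    {V₀ : Euc d → ℝ} (hV₀m : Measurable V₀) {C : ℝ} (hC : ∀ x, |V₀ x| ≤ C)
    {S : Set (Euc d)} {t ε : ℝ} {K : Set (Euc d)}
    (h : ∀ u : Euc d → ℝ, C1c Ω u → (∀ x, 0 ≤ u x) →
      ε * ∫ x in K, |u x| ^ p ≤ energyQ Ω V p u + t * ∫ x in S, V₀ x * |u x| ^ p)
    {u : Euc d → ℝ} (hu : C1c Ω u) :
    ε * ∫ x in K, |u x| ^ p ≤ energyQ Ω V p u + t * ∫ x in S, V₀ x * |u x| ^ p := by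
  have hp0 : 0 < p := by linarith
  set e : ℕ → ℝ := fun n => 1 / ((n : ℝ) + 1) with he
  have he0 : ∀ n, 0 < e n := fun n => by simp only [he]; positivity
  have het : Tendsto e atTop (𝓝 0) := tendsto_one_div_add_atTop_nhds_zero_nat
  set w : ℕ → Euc d → ℝ := fun n x => √(u x ^ 2 + e n ^ 2) - e n with hw
  have hwc : ∀ n, C1c Ω (w n) := fun n => (hu.approx_abs (he0 n)).1
  have hw0 : ∀ n x, 0 ≤ w n x := fun n => (hu.approx_abs (he0 n)).2.1
  have hw1 : ∀ n x, w n x ≤ |u x| := fun n => (hu.approx_abs (he0 n)).2.2.1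
  have hw2 : ∀ n x, |u x| - e n ≤ w n x := fun n => (hu.approx_abs (he0 n)).2.2.2.1
  have hw3 : ∀ n x, ‖gradient (w n) x‖ ≤ ‖gradient u x‖ := fun n => (hu.approx_abs (he0 n)).2.2.2.2
  have hwle : ∀ n x, |w n x| ^ p ≤ |u x| ^ p := fun n x => by
    rw [abs_of_nonneg (hw0 n x)]; exact Real.rpow_le_rpow (hw0 n x) (hw1 n x) hp0.le
  have hwt : ∀ x, Tendsto (fun n => |w n x| ^ p) atTop (𝓝 (|u x| ^ p)) := by
    intro x
    have : Tendsto (fun n => w n x) atTop (𝓝 |u x|) := by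
      refine tendsto_of_tendsto_of_tendsto_of_le_of_le (g := fun n => |u x| - e n) ?_
        tendsto_const_nhds (fun n => hw2 n x) (fun n => hw1 n x)
      simpa using tendsto_const_nhds.sub het
    have := this.abs.rpow_const (p := p) (Or.inr hp0.le)
    simpa using this
  have hdom : ∀ (A : Set (Euc d)) (m : Euc d → ℝ), Measurable m →
      IntegrableOn (fun x => m x * |u x| ^ p) A →
      Tendsto (fun n => ∫ x in A, m x * |w n x| ^ p) atTop (𝓝 (∫ x in A, m x * |u x| ^ p)) := by
    intro A m hm hi
    refine tendsto_integral_of_dominated_convergence (fun x => ‖m x * |u x| ^ p‖) (fun n => ?_)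
      hi.norm (fun n => ?_) ?_
    · exact (hm.mul (cont_rpow hp (hwc n).1.continuous).measurable).aestronglyMeasurable
    · refine Eventually.of_forall fun x => ?_
      rw [norm_mul, norm_mul, Real.norm_of_nonneg (by positivity : 0 ≤ |w n x| ^ p),
        Real.norm_of_nonneg (by positivity : 0 ≤ |u x| ^ p)]
      exact mul_le_mul_of_nonneg_left (hwle n x) (norm_nonneg _)
    · exact Eventually.of_forall fun x => (hwt x).const_mul _
  have t1 := hdom K (fun _ => 1) measurable_const (by simpa using (hu.int_pow hp).integrableOn)
  simp only [one_mul] at t1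
  have t2 := hdom Set.univ V hV.1 (by simpa using hu.int_V hp hV)
  simp only [Measure.restrict_univ] at t2
  have t3 := hdom S V₀ hV₀m ((hu.int_pow hp).integrableOn.bdd_mul (c := C)
    hV₀m.aestronglyMeasurable (Eventually.of_forall hC))
  refine le_of_tendsto_of_tendsto' (t1.const_mul ε)
    (b := atTop) (g := fun n => ((∫ x, ‖gradient u x‖ ^ p) + ∫ x, V x * |w n x| ^ p) +
      t * ∫ x in S, V₀ x * |w n x| ^ p) ?_ fun n => ?_
  · rw [hu.energy_add hp hV]
    exact (tendsto_const_nhds.add t2).add (t3.const_mul t)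
  · refine (h (w n) (hwc n) (hw0 n)).trans ?_
    rw [(hwc n).energy_add hp hV]
    gcongr
    · exact (hwc n).int_grad hp
    · exact hu.int_grad hp
    · intro x
      exact Real.rpow_le_rpow (norm_nonneg _) (hw3 n x) hp0.le

lemma build_W (hΩ : IsOpen Ω) {p : ℝ} (hp : 1 < p) {F : (Euc d → ℝ) → ℝ}
    (h : ∀ K : Set (Euc d), IsCompact K → K ⊆ Ω → ∃ ε > 0, ∀ u : Euc d → ℝ, C1c Ω u →
      ε * ∫ x in K, |u x| ^ p ≤ F u) :
    ∃ W : Euc d → ℝ, Continuous W ∧ (∀ x ∈ Ω, 0 < W x) ∧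
      ∀ u : Euc d → ℝ, C1c Ω u → ∫ x, W x * |u x| ^ p ≤ F u := by
  have hp0 : 0 < p := by linarith
  obtain ⟨K, hKc, hKU⟩ : IsSigmaCompact Ω := by
    have : LocallyCompactSpace Ω := hΩ.locallyCompactSpace
    exact isSigmaCompact_iff_sigmaCompactSpace.2 inferInstance
  have hKΩ : ∀ n, K n ⊆ Ω := fun n => hKU ▸ Set.subset_iUnion K n
  choose χ hχ hχ0 hχ1 hχK using fun n => exists_cutoff hΩ (hKc n) (hKΩ n)
  choose ε hε hF using fun n => h (tsupport (χ n)) (hχ n).2.1 (hχ n).2.2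
  set m : ℕ → ℝ := fun n => min (ε n) 1 with hm
  have hm0 : ∀ n, 0 < m n := fun n => lt_min (hε n) one_pos
  have hm1 : ∀ n, m n ≤ 1 := fun n => min_le_right _ _
  set q : ℕ → ℝ := fun n => (1 / 2) ^ n / 2 with hq
  have hq0 : ∀ n, 0 < q n := fun n => by simp only [hq]; positivity
  have hqs : HasSum q 1 := by
    have := hasSum_geometric_two.div_const 2
    rwa [div_self two_ne_zero] at this
  have hb0 : ∀ n x, 0 ≤ q n * m n * χ n x := fun n x =>
    mul_nonneg (mul_nonneg (hq0 n).le (hm0 n).le) (hχ0 n x)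
  have hb1 : ∀ n x, q n * m n * χ n x ≤ q n := fun n x => by
    have : m n * χ n x ≤ 1 := mul_le_one₀ (hm1 n) (hχ0 n x) (hχ1 n x)
    have := mul_le_mul_of_nonneg_left this (hq0 n).le
    linarith
  have hsum : ∀ x, Summable (fun n => q n * m n * χ n x) := fun x =>
    Summable.of_nonneg_of_le (fun n => hb0 n x) (fun n => hb1 n x) hqs.summable
  refine ⟨fun x => ∑' n, q n * m n * χ n x, ?_, ?_, ?_⟩
  · refine continuous_tsum (fun n => continuous_const.mul (hχ n).1.continuous) hqs.summable
      fun n x => ?_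
    rw [Real.norm_of_nonneg (hb0 n x)]; exact hb1 n x
  · intro x hx
    rw [← hKU] at hx
    obtain ⟨n, hn⟩ := Set.mem_iUnion.1 hx
    refine (hsum x).tsum_pos (fun n => hb0 n x) n ?_
    rw [(hχK n x hn).eq_of_nhds, mul_one]
    exact mul_pos (hq0 n) (hm0 n)
  · intro u hu
    have hi : ∀ n, Integrable (fun x => χ n x * |u x| ^ p) := fun n =>
      (hχ n).int_mul (cont_rpow hp hu.1.continuous)
    have hA0 : 0 ≤ ∫ x in tsupport (χ 0), |u x| ^ p := by positivity
    have hFu : 0 ≤ F u := (mul_nonneg (hε 0).le hA0).trans (hF 0 u hu)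
    have hbound : ∀ n, m n * ∫ x, χ n x * |u x| ^ p ≤ F u := by
      intro n
      have h1 : ∫ x, χ n x * |u x| ^ p ≤ ∫ x in tsupport (χ n), |u x| ^ p := by
        rw [← setIntegral_eq_integral_of_forall_compl_eq_zero (s := tsupport (χ n))
          (fun x hx => by rw [image_eq_zero_of_notMem_tsupport hx, zero_mul])]
        refine integral_mono (hi n).integrableOn (hu.int_pow hp).integrableOn fun x => ?_
        exact mul_le_of_le_one_left (by positivity) (hχ1 n x)
      have h2 : 0 ≤ ∫ x in tsupport (χ n), |u x| ^ p := by positivity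
      calc _ ≤ ε n * ∫ x in tsupport (χ n), |u x| ^ p :=
            mul_le_mul (min_le_left _ _) h1 (integral_nonneg fun x => mul_nonneg (hχ0 n x) (by positivity))
              (hε n).le
        _ ≤ _ := hF n u hu
    have e1 : ∀ x, (∑' n, q n * m n * χ n x) * |u x| ^ p = ∑' n, (q n * m n) * (χ n x * |u x| ^ p) := by
      intro x
      rw [← tsum_mul_right]
      exact tsum_congr fun n => by ring
    simp only [e1]
    have hn : ∀ n, ∫ x, ‖(q n * m n) * (χ n x * |u x| ^ p)‖ = q n * (m n * ∫ x, χ n x * |u x| ^ p) := by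
      intro n
      rw [← integral_const_mul, ← integral_const_mul]
      congr 1; ext x
      rw [Real.norm_of_nonneg]
      · ring
      · exact mul_nonneg (mul_nonneg (hq0 n).le (hm0 n).le) (mul_nonneg (hχ0 n x) (by positivity))
    have hle : ∀ n, q n * (m n * ∫ x, χ n x * |u x| ^ p) ≤ q n * F u := fun n =>
      mul_le_mul_of_nonneg_left (hbound n) (hq0 n).le
    have hs1 : Summable (fun n => q n * (m n * ∫ x, χ n x * |u x| ^ p)) :=
      Summable.of_nonneg_of_le (fun n => by rw [← hn]; positivity) hle (hqs.summable.mul_right _)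
    rw [← integral_tsum_of_summable_integral_norm (fun n => (hi n).const_mul _) (by simpa only [hn] using hs1)]
    calc _ = ∑' n, q n * (m n * ∫ x, χ n x * |u x| ^ p) := tsum_congr fun n => by
            rw [integral_const_mul, mul_assoc]
      _ ≤ ∑' n, q n * F u := hs1.tsum_le_tsum hle (hqs.summable.mul_right _)
      _ = F u := by rw [tsum_mul_right, hqs.tsum_eq, one_mul]

end S11

lemma energy_pert {d : ℕ} {Ω : Set (Euc d)} {p : ℝ} (hp : 1 < p) {V : Euc d → ℝ}
    (hV : LocBddPotential Ω V) {V₀ : Euc d → ℝ} (hV₀m : Measurable V₀) {C : ℝ}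
    (hC : ∀ x, |V₀ x| ≤ C) (t : ℝ) {u : Euc d → ℝ} (hu : C1c Ω u) :
    energyQ Ω (fun x => V x + t * V₀ x) p u = energyQ Ω V p u +
      t * ∫ x in closure (Function.support V₀), V₀ x * |u x| ^ p := by
  have i1 : Integrable (fun x => ‖gradient u x‖ ^ p + V x * |u x| ^ p) :=
    (hu.int_grad hp).add (hu.int_V hp hV)
  have i2 : Integrable (fun x => V₀ x * |u x| ^ p) :=
    (hu.int_pow hp).bdd_mul (c := C) hV₀m.aestronglyMeasurable (Eventually.of_forall hC)
  rw [setIntegral_eq_integral_of_forall_compl_eq_zero (s := closure (Function.support V₀))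
    (fun x hx => by
      have : V₀ x = 0 := by
        by_contra h
        exact hx (subset_closure h)
      rw [this, zero_mul]),
    hu.energy hp, hu.energy hp, ← integral_const_mul, ← integral_add i1 (i2.const_mul t)]
  congr 1
  ext x
  ring

/-- **Perturbation criterion for a degenerately positive functional.** If `Q_V ≥ 0`
admits a ground state `v` and `V₀` is a bounded measurable function whose support has
compact closure contained in `Ω`, then `Q_{V + t V₀}` is strictly positive in `Ω` for
some `t > 0` if and only if `∫_Ω V₀ v^p > 0`. -/
theorem perturbation_criterion {d : ℕ} (hd : 2 ≤ d)
    (Ω : Set (Euc d)) (hΩo : IsOpen Ω) (hΩc : IsConnected Ω)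
    {p : ℝ} (hp₁ : 1 < p) (V : Euc d → ℝ) (hV : LocBddPotential Ω V)
    (hQ : ∀ u : Euc d → ℝ, IsTestFun Ω u → 0 ≤ energyQ Ω V p u)
    (v : Euc d → ℝ) (hv : IsGroundState Ω V p v)
    (V₀ : Euc d → ℝ) (hV₀m : Measurable V₀) (hV₀b : ∃ C : ℝ, ∀ x, |V₀ x| ≤ C)
    (hV₀sc : IsCompact (closure (Function.support V₀)))
    (hV₀sΩ : closure (Function.support V₀) ⊆ Ω) :
    (∃ t : ℝ, 0 < t ∧ HasSpectralGap Ω (fun x => V x + t * V₀ x) p) ↔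
      0 < ∫ x in Ω, V₀ x * v x ^ p := by
  have hp0 : 0 < p := by linarith
  obtain ⟨C, hC⟩ := hV₀b
  obtain ⟨hv1, hvpos, u, ⟨hut, hu0, -, -, -, -, -, hQu⟩, hlim⟩ := hv
  have hu : ∀ k, C1c Ω (u k) := fun k => (hut k).c1c
  have hQC : ∀ f, C1c Ω f → 0 ≤ energyQ Ω V p f := fun f hf => energy_nonneg_C1c hΩo hV hp₁ hQ hf
  have hsup : Super Ω V p v := fun φ hφ => supersol hΩo hp₁ hV hv1 hφ fun ψ hψ =>
    local_min hΩo hp₁ hV hQC hv1 hψ hu hQu hlim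
  set S := closure (Function.support V₀) with hS
  have hI : ∫ x in Ω, V₀ x * v x ^ p = ∫ x in S, V₀ x * |v x| ^ p := by
    rw [← setIntegral_eq_of_subset_of_forall_sdiff_eq_zero hΩo.measurableSet hV₀sΩ (fun x hx => ?_)]
    · refine setIntegral_congr_fun hΩo.measurableSet fun x hx => ?_
      simp only [abs_of_pos (hvpos x hx)]
    · have : V₀ x = 0 := by
        by_contra h
        exact hx.2 (subset_closure h)
      rw [this, zero_mul]
  rw [hI]
  constructor
  · rintro ⟨t, ht, W, hWc, hWpos, hW⟩
    obtain ⟨x0, hx0⟩ := hΩc.nonempty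
    obtain ⟨r0, hr0, hB⟩ := Metric.nhds_basis_closedBall.mem_iff.1 (hΩo.mem_nhds hx0)
    set B := Metric.closedBall x0 r0 with hBdef
    have hBc : IsCompact B := isCompact_closedBall x0 r0
    have cont_v : ContinuousOn (fun x => |v x| ^ p) Ω :=
      hv1.continuousOn.abs.rpow_const fun _ _ => Or.inr hp0.le
    have hpos : 0 < ∫ x in B, W x * |v x| ^ p :=
      int_pos_of_pos hBc hr0 subset_rfl ((hWc.mul cont_v).mono hB) fun x hx => by
        have := hvpos x (hB hx)
        have := hWpos x (hB hx)
        positivity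
    have hle : ∀ k, ∫ x in B, W x * |u k x| ^ p ≤ energyQ Ω V p (u k) +
        t * ∫ x in S, V₀ x * |u k x| ^ p := by
      intro k
      rw [← energy_pert hp₁ hV hV₀m hC t (hu k)]
      refine le_trans ?_ (hW (u k) (hut k))
      have hi : Integrable (fun x => W x * |u k x| ^ p) := by
        refine int_of_cont (hu k).2.1 ?_ fun x hx => ?_
        · exact (hWc.mono (hu k).2.2).mul (cont_rpow hp₁ (hu k).1.continuous).continuousOn
        · rw [image_eq_zero_of_notMem_tsupport hx]; simp [Real.zero_rpow hp0.ne']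
      refine setIntegral_mono_set hi.integrableOn ?_ hB.eventuallyLE
      filter_upwards [ae_restrict_mem hΩo.measurableSet] with x hx
      have := hWpos x hx
      show 0 ≤ W x * |u k x| ^ p
      positivity
    have hlp : ∀ L : Set (Euc d), IsCompact L → L ⊆ Ω → ∀ m : Euc d → ℝ,
        AEStronglyMeasurable m (volume.restrict L) → ∀ D : ℝ,
        (∀ᵐ x ∂(volume.restrict L), |m x| ≤ D) →
        Tendsto (fun k => ∫ x in L, m x * |u k x| ^ p) atTop (𝓝 (∫ x in L, m x * |v x| ^ p)) := by
      intro L hL hLΩ m hm D hD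
      have cv : ContinuousOn v L := hv1.continuousOn.mono hLΩ
      refine lp_tendsto hp₁ (fun k => ?_) ?_ (fun k => ?_) (hlim L hLΩ hL) hm hD
      · exact (cont_rpow hp₁ (hu k).1.continuous).continuousOn.integrableOn_compact hL
      · exact (cv.abs.rpow_const fun _ _ => Or.inr hp0.le).integrableOn_compact hL
      · exact (((hu k).1.continuous.continuousOn.sub cv).abs.rpow_const
          fun _ _ => Or.inr hp0.le).integrableOn_compact hL
    obtain ⟨D, hD⟩ := hBc.exists_bound_of_continuousOn (hWc.mono hB)
    have t1 := hlp B hBc hB W ((hWc.mono hB).aestronglyMeasurable hBc.measurableSet) D (by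
      filter_upwards [ae_restrict_mem hBc.measurableSet] with x hx using hD x hx)
    have t2 := hlp S hV₀sc hV₀sΩ V₀ hV₀m.aestronglyMeasurable C (Eventually.of_forall hC)
    have h3 := le_of_tendsto_of_tendsto' t1 (hQu.add (t2.const_mul t)) hle
    rw [zero_add] at h3
    exact pos_of_mul_pos_right (hpos.trans_le h3) ht.le
  · intro hpos
    obtain ⟨t, ht, h⟩ := strict_pos hΩo hΩc hp₁ hV hQC hv1 hvpos hsup hV₀m hC hV₀sc hV₀sΩ hpos
    obtain ⟨W, hWc, hWpos, hW⟩ := build_W hΩo hp₁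
      (F := fun u => energyQ Ω V p u + t * ∫ x in S, V₀ x * |u x| ^ p) (fun K hK hKΩ => by
        obtain ⟨ε, hε, h'⟩ := h K hK hKΩ
        exact ⟨ε, hε, fun u hu => all_sign hp₁ hV hV₀m hC h' hu⟩)
    refine ⟨t, ht, W, hWc.continuousOn, hWpos, fun w hw => ?_⟩
    rw [energy_pert hp₁ hV hV₀m hC t hw.c1c]
    refine le_trans (le_of_eq ?_) (hW w hw.c1c)
    refine setIntegral_eq_integral_of_forall_compl_eq_zero fun x hx => ?_
    have hx : x ∉ tsupport w := fun h => hx (hw.2.2 h)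
    rw [image_eq_zero_of_notMem_tsupport hx]
    simp [Real.zero_rpow hp0.ne']
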